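/- arXiv:1606.01281 — 2 statements merged into one kernel-verified Lean document; each statement's English description precedes it below -/
import Mathlib

section
/- Let G be formed from disjoint connected graphs G_1 (n_1 vertices, m_1 edges) and G_2 (n_2 vertices, m_2 edges) by identifying a vertex u_1 of G_1 with a vertex u_2 of G_2 into a single vertex u. Then D_R(G) = D_R(G_1) + D_R(G_2) + 2 m_2 Kf_{u_1}(G_1) + 2 m_1 Kf_{u_2}(G_2) + (n_2 - 1) D_{u_1}(G_1) + (n_1 - 1) D_{u_2}(G_2). -/
/-!
The proof has two layers.

*Energy.* Allow an arbitrary prescribed divergence `p` in Thomson's principle. If `H` is the union of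
`G₁` and `G₂` along a single common vertex, a flow on `H` is the same thing as a pair of flows, one on
each piece, and energies add. Conservation on the far side of the cut-vertex determines the
divergence of each piece: its values away from the cut-vertex are those of `p`, and the value at the
cut-vertex is forced because divergences sum to zero. Hence the set of energies of flows on `H` is the
pointwise sum of the two sets of energies (`IsOneSum.energies_eq`), and infima add. Applied to the
dipole `δ_a - δ_b` this gives the cut-vertex rule (`IsOneSum.eRes_cross`) and the fact that
resistances inside a piece do not change (`IsOneSum.eRes_left`).

*Counting.* By symmetry of the resistance, `D_R(G) = Σ_w d(w) Σ_x r(w,x)`. A sum over `H` weighted by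
degrees splits as the sum of the degree-weighted sums over the pieces
(`IsOneSum.sum_vdeg_mul`), because the degree of the cut-vertex is the sum of its degrees in the two
pieces. The inner sum is evaluated with the cut-vertex rule, and the handshake lemma produces
the terms `2 m₁` and `2 m₂`.

The situation is described by embeddings `i : A → W`, `j : B → W` of the two pieces, so that
the two pieces play symmetric roles.
-/

open Finset

/-- The effective resistance between `a` and `b` in the electrical network obtained
from `G` by replacing each edge with a unit resistor, defined via Thomson's
principle as the minimal energy of a unit flow from `a` to `b`. -/
noncomputable def eRes {V : Type*} [Fintype V] (G : SimpleGraph V) (a b : V) : ℝ :=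
  sInf { E : ℝ | ∃ f : V → V → ℝ,
    (∀ u v, f u v = - f v u) ∧
    (∀ u v, ¬ G.Adj u v → f u v = 0) ∧
    (∀ v, v ≠ a → v ≠ b → ∑ u, f v u = 0) ∧
    (∑ u, f a u = 1) ∧
    E = (1/2) * ∑ u, ∑ v, (f u v)^2 }

/-- The degree of a vertex. -/
noncomputable def vdeg {V : Type*} (G : SimpleGraph V) (v : V) : ℕ :=
  Nat.card (G.neighborSet v)

/-- `Kf_v(G)`, the sum of resistance distances from `v` to all vertices. -/
noncomputable def KfAt {V : Type*} [Fintype V] (G : SimpleGraph V) (v : V) : ℝ :=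
  ∑ u : V, eRes G u v

/-- The Kirchhoff index `Kf(G) = Σ_{{u,v}} r(u,v)`. -/
noncomputable def Kf {V : Type*} [Fintype V] (G : SimpleGraph V) : ℝ :=
  (1/2) * ∑ v : V, ∑ u : V, eRes G u v

/-- `D_v(G) = Σ_u d(u) r(u,v)`. -/
noncomputable def DAt {V : Type*} [Fintype V] (G : SimpleGraph V) (v : V) : ℝ :=
  ∑ u : V, (vdeg G u : ℝ) * eRes G u v

/-- The degree resistance distance `D_R(G) = Σ_{{u,v}} (d(u)+d(v)) r(u,v)`. -/
noncomputable def DR {V : Type*} [Fintype V] (G : SimpleGraph V) : ℝ :=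
  (1/2) * ∑ v : V, ∑ u : V, ((vdeg G u : ℝ) + (vdeg G v : ℝ)) * eRes G u v


/-- The graph obtained from disjoint graphs `G₁`, `G₂` by identifying the vertex
`u₁` of `G₁` with the vertex `u₂` of `G₂`; the identified vertex is `Sum.inl u₁`. -/
def glue {V₁ V₂ : Type*} (G₁ : SimpleGraph V₁) (G₂ : SimpleGraph V₂) (u₁ : V₁) (u₂ : V₂) :
    SimpleGraph (V₁ ⊕ {v : V₂ // v ≠ u₂}) :=
  SimpleGraph.fromRel (fun a b =>
    match a, b with
    | Sum.inl a, Sum.inl b => G₁.Adj a b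
    | Sum.inr a, Sum.inr b => G₂.Adj a.val b.val
    | Sum.inl a, Sum.inr b => a = u₁ ∧ G₂.Adj u₂ b.val
    | Sum.inr _, Sum.inl _ => False)

open scoped Pointwise

/-! ### Flows with prescribed divergence -/

/-- The divergence `δ_a - δ_b` of a unit flow from `a` to `b`; it is zero when `a = b`. -/
noncomputable def dipole {V : Type*} (a b x : V) : ℝ :=
  open Classical in (if x = a then 1 else 0) - (if x = b then 1 else 0)

/-- The energies of the flows on `G` whose net outflow at each vertex `v` is `p v`. -/
def energies {V : Type*} [Fintype V] (G : SimpleGraph V) (p : V → ℝ) : Set ℝ :=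
  { E : ℝ | ∃ f : V → V → ℝ,
    (∀ u v, f u v = - f v u) ∧
    (∀ u v, ¬ G.Adj u v → f u v = 0) ∧
    (∀ v, ∑ u, f v u = p v) ∧
    E = (1/2) * ∑ u, ∑ v, (f u v)^2 }

lemma dipole_self {V : Type*} (a : V) : dipole a a = 0 := by
  funext x; simp [dipole]

section Flows

variable {V : Type*} [Fintype V] (G : SimpleGraph V)

lemma sum_sum_of_antisymm (f : V → V → ℝ) (h : ∀ u v, f u v = - f v u) :
    ∑ u, ∑ v, f u v = 0 := by
  have h1 : ∑ u, ∑ v, f u v = - ∑ u, ∑ v, f u v := by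
    conv_lhs => rw [Finset.sum_comm]
    rw [← Finset.sum_neg_distrib]
    refine Finset.sum_congr rfl fun u _ => ?_
    rw [← Finset.sum_neg_distrib]
    exact Finset.sum_congr rfl fun v _ => h v u
  linarith

lemma sum_dipole (a b : V) : ∑ x, dipole a b x = 0 := by
  classical
  simp [dipole, Finset.sum_sub_distrib]

lemma eq_of_sum_eq_of_ne {p q : V → ℝ} (a : V) (hs : ∑ x, p x = ∑ x, q x)
    (h : ∀ x, x ≠ a → p x = q x) : p = q := by
  classical
  have h1 : ∑ x, (p x - q x) = p a - q a :=
    Finset.sum_eq_single a (fun x _ hx => by rw [h x hx, sub_self]) (by simp)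
  rw [Finset.sum_sub_distrib, hs, sub_self] at h1
  funext x
  by_cases hx : x = a
  · subst hx; linarith
  · exact h x hx

lemma energies_nonneg {p : V → ℝ} {E : ℝ} (h : E ∈ energies G p) : 0 ≤ E := by
  obtain ⟨f, -, -, -, rfl⟩ := h
  positivity

lemma bddBelow_energies (p : V → ℝ) : BddBelow (energies G p) :=
  ⟨0, fun _ h => energies_nonneg G h⟩

lemma zero_mem_energies : (0 : ℝ) ∈ energies G 0 :=
  ⟨0, by simp, by simp, by simp, by simp⟩

lemma sInf_energies_zero : sInf (energies G 0) = 0 :=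
  IsLeast.csInf_eq ⟨zero_mem_energies G, fun _ h => energies_nonneg G h⟩

/-- The resistance as a minimal energy with the divergence prescribed at every vertex. When `a = b`
the set in the definition of `eRes` is empty, so its infimum is the junk value `0`, which agrees with
the energy of the zero flow. -/
lemma eRes_eq (a b : V) : eRes G a b = sInf (energies G (dipole a b)) := by
  classical
  by_cases hab : a = b
  · subst hab
    rw [dipole_self, sInf_energies_zero]
    unfold eRes
    convert Real.sInf_empty
    rw [Set.eq_empty_iff_forall_notMem]
    rintro E ⟨f, hf, -, h0, h1, -⟩
    have h2 := sum_sum_of_antisymm f hf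
    rw [Finset.sum_eq_single a (fun v _ hv => h0 v hv hv) (by simp), h1] at h2
    exact one_ne_zero h2
  · unfold eRes energies
    congr 1
    ext E
    refine exists_congr fun f => and_congr_right fun hf => and_congr_right fun _ => ?_
    rw [← and_assoc]
    refine and_congr_left fun _ => ⟨?_, ?_⟩
    · rintro ⟨h0, h1⟩
      refine congrFun (eq_of_sum_eq_of_ne b ?_ ?_)
      · rw [sum_dipole, sum_sum_of_antisymm f hf]
      · intro x hx
        by_cases hxa : x = a
        · subst hxa; simp [dipole, hx, h1]
        · simp [dipole, hx, hxa, h0 x hxa hx]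
    · intro h
      refine ⟨fun v hva hvb => by simp [h, dipole, hva, hvb], by simp [h, dipole, hab]⟩

lemma eRes_comm (a b : V) : eRes G a b = eRes G b a := by
  have key : ∀ a b, energies G (dipole a b) ⊆ energies G (dipole b a) := by
    rintro a b E ⟨f, h1, h2, h3, rfl⟩
    refine ⟨fun u v => - f u v, fun u v => congrArg Neg.neg (h1 u v), fun u v h => by simp [h2 u v h],
      fun v => ?_, by simp⟩
    rw [Finset.sum_neg_distrib, h3]
    simp [dipole]
  rw [eRes_eq, eRes_eq, (key a b).antisymm (key b a)]

lemma energies_dipole_nonempty (h : G.Connected) (a b : V) :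
    (energies G (dipole a b)).Nonempty := by
  classical
  obtain ⟨w⟩ := h.preconnected a b
  induction w with
  | nil => rw [dipole_self]; exact ⟨0, zero_mem_energies G⟩
  | @cons a c b hac _ ih =>
    obtain ⟨_, f, h1, h2, h3, -⟩ := ih
    refine ⟨_, fun x y => f x y + ((if x = a ∧ y = c then 1 else 0)
      - (if x = c ∧ y = a then 1 else 0)), fun x y => ?_, fun x y hxy => ?_, fun x => ?_, rfl⟩
    · simp only [h1 x y, and_comm (a := x = a), and_comm (a := x = c)]
      ring
    · have e1 : ¬ (x = a ∧ y = c) := by rintro ⟨rfl, rfl⟩; exact hxy hac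
      have e2 : ¬ (x = c ∧ y = a) := by rintro ⟨rfl, rfl⟩; exact hxy hac.symm
      simp [e1, e2, h2 x y hxy]
    · rw [Finset.sum_add_distrib, h3, Finset.sum_sub_distrib]
      simp only [dipole, ite_and]
      by_cases hxa : x = a <;> by_cases hxc : x = c <;> simp [hxa, hxc]

end Flows

/-! ### Graphs glued at a vertex -/

/-- `H` is the union of copies of `G₁` and `G₂`, embedded by `i` and `j`, which share exactly the vertex
`i u = j v`; every edge of `H` lies inside one of the two copies. -/
structure IsOneSum {A B W : Type*} (H : SimpleGraph W) (G₁ : SimpleGraph A) (G₂ : SimpleGraph B)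
    (i : A → W) (j : B → W) (u : A) (v : B) : Prop where
  inj_left : Function.Injective i
  inj_right : Function.Injective j
  base : i u = j v
  cover : ∀ w, (∃ a, i a = w) ∨ ∃ b, j b = w
  inter : ∀ a b, i a = j b → a = u ∧ b = v
  adj_left : ∀ a a', H.Adj (i a) (i a') ↔ G₁.Adj a a'
  adj_right : ∀ b b', H.Adj (j b) (j b') ↔ G₂.Adj b b'
  no_cross : ∀ a b, H.Adj (i a) (j b) → a = u ∨ b = v

namespace IsOneSum

variable {A B W : Type*} {H : SimpleGraph W} {G₁ : SimpleGraph A} {G₂ : SimpleGraph B}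
  {i : A → W} {j : B → W} {u : A} {v : B}

lemma symm (h : IsOneSum H G₁ G₂ i j u v) : IsOneSum H G₂ G₁ j i v u where
  inj_left := h.inj_right
  inj_right := h.inj_left
  base := h.base.symm
  cover w := (h.cover w).symm
  inter a b e := (h.inter b a e.symm).symm
  adj_left := h.adj_right
  adj_right := h.adj_left
  no_cross a b e := (h.no_cross b a e.symm).symm

lemma eq_iff (h : IsOneSum H G₁ G₂ i j u v) (a : A) (b : B) : i a = j b ↔ a = u ∧ b = v :=
  ⟨h.inter a b, by rintro ⟨rfl, rfl⟩; exact h.base⟩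

lemma left_iff (h : IsOneSum H G₁ G₂ i j u v) (a a' : A) : i a = i a' ↔ a = a' :=
  h.inj_left.eq_iff

variable [Fintype A] [Fintype B] [Fintype W]

lemma sum_eq (h : IsOneSum H G₁ G₂ i j u v) (g : W → ℝ) :
    ∑ w, g w = ∑ a, g (i a) + ∑ b, g (j b) - g (i u) := by
  classical
  have h1 := Finset.sum_union_inter (s₁ := univ.image i) (s₂ := univ.image j) (f := g)
  have h2 : univ.image i ∪ univ.image j = univ := by
    ext w; simpa using h.cover w
  have h3 : univ.image i ∩ univ.image j = {i u} := by
    ext w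
    simp only [mem_inter, mem_image, mem_univ, true_and, mem_singleton]
    constructor
    · rintro ⟨⟨a, rfl⟩, b, hb⟩
      rw [(h.inter a b hb.symm).1]
    · rintro rfl
      exact ⟨⟨u, rfl⟩, v, h.base.symm⟩
  rw [h2, h3, Finset.sum_singleton, Finset.sum_image fun _ _ _ _ e => h.inj_left e,
    Finset.sum_image fun _ _ _ _ e => h.inj_right e] at h1
  linarith

open Classical in
lemma row_left (h : IsOneSum H G₁ G₂ i j u v) (F : W → W → ℝ)
    (hF : ∀ x y, ¬ H.Adj x y → F x y = 0) (a : A) :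
    ∑ y, F (i a) y = ∑ a', F (i a) (i a') + if a = u then ∑ b, F (j v) (j b) else 0 := by
  rw [h.sum_eq]
  by_cases ha : a = u
  · subst ha
    rw [hF (i a) (i a) (H.irrefl)]
    simp [h.base]
  · rw [Finset.sum_eq_single v, h.base]
    · simp [ha]
    · intro b _ hb
      exact hF _ _ fun e => (h.no_cross a b e).elim ha hb
    · simp

lemma sum_sum_eq (h : IsOneSum H G₁ G₂ i j u v) (F : W → W → ℝ)
    (hF : ∀ x y, ¬ H.Adj x y → F x y = 0) :
    ∑ x, ∑ y, F x y = ∑ a, ∑ a', F (i a) (i a') + ∑ b, ∑ b', F (j b) (j b') := by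
  classical
  rw [h.sum_eq]
  simp only [h.row_left F hF, h.symm.row_left F hF, Finset.sum_add_distrib]
  simp
  ring

/-- Energies of flows add up. The divergence `p` on `H` is obtained from `p₁` and `p₂` by adding the
two values at the common vertex. -/
lemma energies_eq (h : IsOneSum H G₁ G₂ i j u v) (p : W → ℝ) (p₁ : A → ℝ) (p₂ : B → ℝ)
    (hs₁ : ∑ a, p₁ a = 0) (hs₂ : ∑ b, p₂ b = 0)
    (hp₁ : ∀ a, a ≠ u → p (i a) = p₁ a) (hp₂ : ∀ b, b ≠ v → p (j b) = p₂ b)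
    (hp : p (i u) = p₁ u + p₂ v) :
    energies H p = energies G₁ p₁ + energies G₂ p₂ := by
  classical
  ext E
  rw [Set.mem_add]
  constructor
  · rintro ⟨f, h1, h2, h3, rfl⟩
    refine ⟨_, ⟨fun a a' => f (i a) (i a'), fun _ _ => h1 _ _,
      fun a a' ha => h2 _ _ (by rwa [h.adj_left]), ?_, rfl⟩,
      _, ⟨fun b b' => f (j b) (j b'), fun _ _ => h1 _ _,
      fun a a' ha => h2 _ _ (by rwa [h.adj_right]), ?_, rfl⟩, ?_⟩
    · refine congrFun (eq_of_sum_eq_of_ne u ?_ fun a ha => ?_)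
      · rw [hs₁]; exact sum_sum_of_antisymm _ fun _ _ => h1 _ _
      · rw [← hp₁ a ha, ← h3, h.row_left f h2]; simp [ha]
    · refine congrFun (eq_of_sum_eq_of_ne v ?_ fun b hb => ?_)
      · rw [hs₂]; exact sum_sum_of_antisymm _ fun _ _ => h1 _ _
      · rw [← hp₂ b hb, ← h3, h.symm.row_left f h2]; simp [hb]
    · rw [h.sum_sum_eq (fun x y => f x y ^ 2) fun x y hxy => by simp [h2 x y hxy]]
      ring
  · rintro ⟨_, ⟨f, f1, f2, f3, rfl⟩, _, ⟨g, g1, g2, g3, rfl⟩, rfl⟩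
    have hinj₁ : Function.Injective (Prod.map i i) := h.inj_left.prodMap h.inj_left
    have hinj₂ : Function.Injective (Prod.map j j) := h.inj_right.prodMap h.inj_right
    -- Both flows are extended by zero to `W × W` and added.
    set F : W × W → ℝ := Function.extend (Prod.map i i) (fun q => f q.1 q.2) 0
    set K : W × W → ℝ := Function.extend (Prod.map j j) (fun q => g q.1 q.2) 0
    have Fi : ∀ a a', F (i a, i a') = f a a' := fun a a' =>
      hinj₁.extend_apply (fun q : A × A => f q.1 q.2) 0 (a, a')
    have Kj : ∀ b b', K (j b, j b') = g b b' := fun b b' =>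
      hinj₂.extend_apply (fun q : B × B => g q.1 q.2) 0 (b, b')
    have Fn : ∀ x y, (¬ ∃ a a', i a = x ∧ i a' = y) → F (x, y) = 0 := fun x y hn =>
      Function.extend_apply' _ _ _ (by
        rintro ⟨⟨a, a'⟩, e⟩
        exact hn ⟨a, a', congrArg Prod.fst e, congrArg Prod.snd e⟩)
    have Kn : ∀ x y, (¬ ∃ b b', j b = x ∧ j b' = y) → K (x, y) = 0 := fun x y hn =>
      Function.extend_apply' _ _ _ (by
        rintro ⟨⟨a, a'⟩, e⟩
        exact hn ⟨a, a', congrArg Prod.fst e, congrArg Prod.snd e⟩)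
    have Ki : ∀ a a', K (i a, i a') = 0 := by
      intro a a'
      by_cases hn : ∃ b b', j b = i a ∧ j b' = i a'
      · obtain ⟨b, b', e, e'⟩ := hn
        rw [← e, ← e', Kj, (h.inter a b e.symm).2, (h.inter a' b' e'.symm).2]
        exact g2 _ _ G₂.irrefl
      · exact Kn _ _ hn
    have Fj : ∀ b b', F (j b, j b') = 0 := by
      intro b b'
      by_cases hn : ∃ a a', i a = j b ∧ i a' = j b'
      · obtain ⟨a, a', e, e'⟩ := hn
        rw [← e, ← e', Fi, (h.inter a b e).1, (h.inter a' b' e').1]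
        exact f2 _ _ G₁.irrefl
      · exact Fn _ _ hn
    have hsupp : ∀ x y, ¬ H.Adj x y → F (x, y) + K (x, y) = 0 := by
      intro x y hxy
      have e1 : F (x, y) = 0 := by
        by_cases hn : ∃ a a', i a = x ∧ i a' = y
        · obtain ⟨a, a', rfl, rfl⟩ := hn
          rw [Fi]; exact f2 _ _ (by rwa [← h.adj_left])
        · exact Fn _ _ hn
      have e2 : K (x, y) = 0 := by
        by_cases hn : ∃ a a', j a = x ∧ j a' = y
        · obtain ⟨a, a', rfl, rfl⟩ := hn
          rw [Kj]; exact g2 _ _ (by rwa [← h.adj_right])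
        · exact Kn _ _ hn
      rw [e1, e2, add_zero]
    refine ⟨fun x y => F (x, y) + K (x, y), fun x y => ?_, hsupp, fun x => ?_, ?_⟩
    · have e1 : F (x, y) = - F (y, x) := by
        by_cases hn : ∃ a a', i a = x ∧ i a' = y
        · obtain ⟨a, a', rfl, rfl⟩ := hn
          rw [Fi, Fi]; exact f1 _ _
        · rw [Fn _ _ hn, Fn _ _ fun ⟨a, a', e, e'⟩ => hn ⟨a', a, e', e⟩, neg_zero]
      have e2 : K (x, y) = - K (y, x) := by
        by_cases hn : ∃ a a', j a = x ∧ j a' = y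
        · obtain ⟨a, a', rfl, rfl⟩ := hn
          rw [Kj, Kj]; exact g1 _ _
        · rw [Kn _ _ hn, Kn _ _ fun ⟨a, a', e, e'⟩ => hn ⟨a', a, e', e⟩, neg_zero]
      linarith
    · rcases h.cover x with ⟨a, rfl⟩ | ⟨b, rfl⟩
      · rw [h.row_left (fun x y => F (x, y) + K (x, y)) hsupp]
        simp only [Fi, Ki, Fj, Kj, add_zero, zero_add, f3, g3]
        by_cases ha : a = u
        · subst ha; simp [hp]
        · simp [ha, hp₁ a ha]
      · rw [h.symm.row_left (fun x y => F (x, y) + K (x, y)) hsupp]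
        simp only [Fi, Ki, Fj, Kj, add_zero, zero_add, f3, g3]
        by_cases hb : b = v
        · subst hb; rw [← h.base, hp]; simp [add_comm]
        · simp [hb, hp₂ b hb]
    · rw [h.sum_sum_eq (fun x y => (F (x, y) + K (x, y)) ^ 2)
        fun x y hxy => by simp [hsupp x y hxy]]
      simp only [Fi, Ki, Fj, Kj, add_zero, zero_add]
      ring

/-- The cut-vertex rule. -/
lemma eRes_cross (h : IsOneSum H G₁ G₂ i j u v) (h₁ : G₁.Connected) (h₂ : G₂.Connected)
    (a : A) (b : B) : eRes H (i a) (j b) = eRes G₁ a u + eRes G₂ v b := by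
  classical
  rw [eRes_eq, eRes_eq, eRes_eq,
    h.energies_eq (dipole (i a) (j b)) (dipole a u) (dipole v b) (sum_dipole _ _) (sum_dipole _ _),
    csInf_add (energies_dipole_nonempty _ h₁ _ _) (bddBelow_energies _ _)
      (energies_dipole_nonempty _ h₂ _ _) (bddBelow_energies _ _)]
  · intro a' ha'
    simp [dipole, h.left_iff, h.eq_iff, ha']
  · intro b' hb'
    simp [dipole, h.symm.left_iff, h.symm.eq_iff, hb']
  · by_cases ha : u = a <;> by_cases hb : v = b <;>
      simp [dipole, h.left_iff, h.eq_iff, ha, hb, eq_comm (a := b)]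

lemma eRes_left (h : IsOneSum H G₁ G₂ i j u v) (h₁ : G₁.Connected)
    (a a' : A) : eRes H (i a) (i a') = eRes G₁ a a' := by
  classical
  rw [eRes_eq, eRes_eq,
    h.energies_eq (dipole (i a) (i a')) (dipole a a') 0 (sum_dipole _ _) (by simp),
    csInf_add (energies_dipole_nonempty _ h₁ _ _) (bddBelow_energies _ _)
      ⟨0, zero_mem_energies _⟩ (bddBelow_energies _ _), sInf_energies_zero, add_zero]
  · intro x _
    simp [dipole, h.left_iff]
  · intro b hb
    simp [dipole, h.symm.eq_iff, hb]
  · simp [dipole, h.left_iff]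

end IsOneSum

/-! ### Degree-weighted sums -/

open Classical in
lemma vdeg_eq_sum {V : Type*} [Fintype V] (G : SimpleGraph V) (x : V) :
    (vdeg G x : ℝ) = ∑ y, if G.Adj x y then 1 else 0 := by
  simp only [vdeg, Nat.card_eq_fintype_card, SimpleGraph.card_neighborSet_eq_degree]
  rw [Finset.sum_boole, ← SimpleGraph.card_neighborFinset_eq_degree,
    SimpleGraph.neighborFinset_eq_filter]

lemma sum_vdeg {V : Type*} [Fintype V] (G : SimpleGraph V) :
    ∑ x, (vdeg G x : ℝ) = 2 * (Nat.card G.edgeSet : ℝ) := by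
  classical
  simp only [vdeg, Nat.card_eq_fintype_card, SimpleGraph.card_neighborSet_eq_degree]
  rw [← SimpleGraph.edgeFinset_card]
  exact_mod_cast G.sum_degrees_eq_twice_card_edges

lemma DR_eq {V : Type*} [Fintype V] (G : SimpleGraph V) :
    DR G = ∑ x, (vdeg G x : ℝ) * ∑ y, eRes G x y := by
  have h1 : ∑ v, ∑ u, (vdeg G u : ℝ) * eRes G u v = ∑ x, (vdeg G x : ℝ) * ∑ y, eRes G x y := by
    rw [Finset.sum_comm]
    simp only [Finset.mul_sum]
  have h2 : ∑ v, ∑ u, (vdeg G v : ℝ) * eRes G u v = ∑ x, (vdeg G x : ℝ) * ∑ y, eRes G x y := by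
    simp only [Finset.mul_sum]
    exact Finset.sum_congr rfl fun x _ => Finset.sum_congr rfl fun y _ => by rw [eRes_comm]
  unfold DR
  simp only [add_mul, Finset.sum_add_distrib]
  rw [h1, h2]
  ring

namespace IsOneSum

variable {A B W : Type*} {H : SimpleGraph W} {G₁ : SimpleGraph A} {G₂ : SimpleGraph B}
  {i : A → W} {j : B → W} {u : A} {v : B} [Fintype A] [Fintype B] [Fintype W]

/-- The common vertex has degree `d(u) + d(v)`, so it needs no correction term here, in contrast to
`IsOneSum.sum_eq`. -/
lemma sum_vdeg_mul (h : IsOneSum H G₁ G₂ i j u v) (φ : W → ℝ) :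
    ∑ w, (vdeg H w : ℝ) * φ w
      = ∑ a, (vdeg G₁ a : ℝ) * φ (i a) + ∑ b, (vdeg G₂ b : ℝ) * φ (j b) := by
  classical
  simp only [vdeg_eq_sum, Finset.sum_mul]
  rw [h.sum_sum_eq (fun x y => (if H.Adj x y then 1 else 0) * φ x) fun x y hxy => by simp [hxy]]
  simp only [h.adj_left, h.adj_right]

lemma sum_eRes_left (h : IsOneSum H G₁ G₂ i j u v) (h₁ : G₁.Connected) (h₂ : G₂.Connected)
    (a : A) : ∑ w, eRes H (i a) w
      = ∑ a', eRes G₁ a a' + ((Fintype.card B : ℝ) - 1) * eRes G₁ a u + KfAt G₂ v := by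
  rw [h.sum_eq]
  simp only [h.eRes_left h₁, h.eRes_cross h₁ h₂, Finset.sum_add_distrib, KfAt, eRes_comm G₂ v]
  simp
  ring

lemma sum_vdeg_mul_left (h : IsOneSum H G₁ G₂ i j u v) (h₁ : G₁.Connected) (h₂ : G₂.Connected) :
    ∑ a, (vdeg G₁ a : ℝ) * ∑ w, eRes H (i a) w
      = DR G₁ + ((Fintype.card B : ℝ) - 1) * DAt G₁ u
        + 2 * (Nat.card G₁.edgeSet : ℝ) * KfAt G₂ v := by
  simp only [h.sum_eRes_left h₁ h₂, mul_add, Finset.sum_add_distrib]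
  rw [← DR_eq, ← Finset.sum_mul, sum_vdeg, DAt, Finset.mul_sum]
  simp only [mul_left_comm]

lemma DR_eq_add (h : IsOneSum H G₁ G₂ i j u v) (h₁ : G₁.Connected) (h₂ : G₂.Connected) :
    DR H = DR G₁ + DR G₂ + 2 * (Nat.card G₂.edgeSet : ℝ) * KfAt G₁ u
        + 2 * (Nat.card G₁.edgeSet : ℝ) * KfAt G₂ v
        + ((Fintype.card B : ℝ) - 1) * DAt G₁ u
        + ((Fintype.card A : ℝ) - 1) * DAt G₂ v := by
  rw [DR_eq, h.sum_vdeg_mul, h.sum_vdeg_mul_left h₁ h₂, h.symm.sum_vdeg_mul_left h₂ h₁]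
  ring

end IsOneSum

lemma isOneSum_glue {V₁ V₂ : Type*} [DecidableEq V₂]
    (G₁ : SimpleGraph V₁) (G₂ : SimpleGraph V₂) (u₁ : V₁) (u₂ : V₂) :
    IsOneSum (glue G₁ G₂ u₁ u₂) G₁ G₂ Sum.inl
      (fun b => if hb : b = u₂ then Sum.inl u₁ else Sum.inr ⟨b, hb⟩) u₁ u₂ where
  inj_left := Sum.inl_injective
  inj_right := by
    intro b b' e
    by_cases hb : b = u₂ <;> by_cases hb' : b' = u₂ <;> simp_all
  base := by simp
  cover := by
    rintro (a | ⟨b, hb⟩)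
    · exact Or.inl ⟨a, rfl⟩
    · exact Or.inr ⟨b, by simp [hb]⟩
  inter := by
    intro a b e
    by_cases hb : b = u₂ <;> simp_all
  adj_left := by
    intro a a'
    simp only [glue, SimpleGraph.fromRel_adj, ne_eq, Sum.inl.injEq]
    exact ⟨fun e => e.2.elim id fun e => e.symm, fun e => ⟨e.ne, Or.inl e⟩⟩
  adj_right := by
    intro b b'
    by_cases hb : b = u₂ <;> by_cases hb' : b' = u₂
    · simp [hb, hb']
    · simp [hb, hb', glue, SimpleGraph.fromRel_adj]
    · simp [hb, hb', glue, SimpleGraph.fromRel_adj, G₂.adj_comm b]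
    · simp only [hb, hb', glue, SimpleGraph.fromRel_adj, dite_false, ne_eq, Sum.inr.injEq,
        Subtype.mk.injEq]
      exact ⟨fun e => e.2.elim id fun e => e.symm, fun e => ⟨e.ne, Or.inl e⟩⟩
  no_cross := by
    intro a b e
    by_cases hb : b = u₂
    · exact Or.inr hb
    · simp [hb, glue, SimpleGraph.fromRel_adj] at e
      exact Or.inl e.1

/-- Cut-vertex decomposition of the degree resistance distance:
`D_R(G) = D_R(G₁) + D_R(G₂) + 2m₂·Kf_{u₁}(G₁) + 2m₁·Kf_{u₂}(G₂)
          + (n₂-1)·D_{u₁}(G₁) + (n₁-1)·D_{u₂}(G₂)`. -/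
theorem DR_glue {V₁ V₂ : Type*} [Fintype V₁] [Fintype V₂] [DecidableEq V₂]
    (G₁ : SimpleGraph V₁) (G₂ : SimpleGraph V₂) (h₁ : G₁.Connected) (h₂ : G₂.Connected)
    (u₁ : V₁) (u₂ : V₂) :
    DR (glue G₁ G₂ u₁ u₂) =
      DR G₁ + DR G₂ + 2 * (Nat.card G₂.edgeSet : ℝ) * KfAt G₁ u₁
        + 2 * (Nat.card G₁.edgeSet : ℝ) * KfAt G₂ u₂
        + ((Fintype.card V₂ : ℝ) - 1) * DAt G₁ u₁
        + ((Fintype.card V₁ : ℝ) - 1) * DAt G₂ u₂ := by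
  exact (isOneSum_glue G₁ G₂ u₁ u₂).DR_eq_add h₁ h₂
end

section
/- Among all n-vertex bicyclic graphs with exactly two cycles (n ≥ 5), the graph P_n^{3,3} — two triangles joined by a path of length n - 5 — attains the maximum degree resistance distance, and D_R(P_n^{3,3}) = (2/3)n^3 + n^2 - 19n + 88/3. -/
/-!
The proof reduces the degree resistance distance to sums of distances in a well-chosen spanning
tree.

Let `G` be connected with `n` vertices and `n + 1` edges. Then `G` is a spanning tree `T` together
with two edges `x₁y₁` and `x₂y₂` (`Config`). If the two tree paths from `xᵢ` to `yᵢ` had a common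
edge, there would be a third cycle, so they are edge-disjoint (`Config.edge_disjoint`). Writing
`lev T x y v` for the position at which `v` branches off the path from `x` to `y`, the effective
resistance is then
`r(a, b) = dist a b - ∑ᵢ (levᵢ a - levᵢ b)² / pᵢ`, where `pᵢ = dist xᵢ yᵢ + 1` is the length of
the `i`-th cycle (`Config.eRes_eq`): the potential of the tree is corrected by multiples of the two
level functions, and Thomson's principle identifies the energy of the resulting flow.

Both cycles can be rotated: replacing the first edge of the path from `x₁` to `y₁` by `x₁y₁` gives
another spanning tree. Choosing the spanning tree and the two edges with `dist x₁ x₂` minimal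
therefore forces each cycle to be attached to the other one at `x₁` and `x₂`
(`exists_exchange`, `Config.gate`). For such a choice all degree-weighted sums can be evaluated with
Green's identity, and
`DR G = 2 * ∑ dist - n (n - 1) + contrib T x₁ y₁ + contrib T x₂ y₂` (`Config.DR_eq`),
the sum running over ordered pairs.

The three terms are bounded separately. The sum of all distances is at most `(n³ - n) / 3`
(`sum_sum_dist_le`). Each contribution is at most `n (n - 1) - (26 n - 44) / 3`, because at least
three vertices are attached at `xᵢ`: the other cycle has three vertices (`cycle_bound`,
`Config.contrib_le`). For `P33` the spanning tree is a path and the two cycles are triangles at its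
ends, and all bounds are attained (`P33_DR`).
-/

open Finset

/-- `s` is the vertex set of a cycle of `G`. -/
def IsCycleSet {V : Type*} [DecidableEq V] (G : SimpleGraph V) (s : Set V) : Prop :=
  ∃ (v : V) (w : G.Walk v v), w.IsCycle ∧ (↑w.support.toFinset : Set V) = s

/-- `P_n^{3,3}`: two triangles `{0,1,2}` and `{n-3,n-2,n-1}` joined by the path
`2, 3, …, n-3` of length `n - 5`. -/
def P33 (n : ℕ) : SimpleGraph (Fin n) :=
  SimpleGraph.fromRel (fun a b =>
    b.val = a.val + 1 ∨ (a.val = 0 ∧ b.val = 2) ∨ (a.val = n - 3 ∧ b.val = n - 1))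

namespace P33Proof

/-! ### Distances in trees -/

section Tree

variable {V : Type*} {T : SimpleGraph V}

/-- A vertex `u ≠ a` of a tree has a neighbour closer to `a`. -/
lemma exists_closer (hT : T.Connected) {a u : V} (hu : u ≠ a) :
    ∃ w, T.Adj u w ∧ T.dist a u = T.dist a w + 1 := by
  obtain ⟨p, hp⟩ := hT.exists_walk_length_eq_dist u a
  cases p with
  | nil => exact absurd rfl hu
  | @cons _ w _ h q =>
    refine ⟨w, h, ?_⟩
    rw [SimpleGraph.Walk.length_cons] at hp
    have h1 := T.dist_le q
    have h2 : T.dist u a ≤ T.dist u w + T.dist w a := hT.dist_triangle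
    have h3 : T.dist u w = 1 := SimpleGraph.dist_eq_one_iff_adj.2 h
    rw [T.dist_comm (u := a), T.dist_comm (u := a)]
    omega

/-- The neighbour closer to `a` is unique, because geodesics in a tree are. -/
lemma closer_unique (hT : T.IsTree) {a u w w' : V} (h : T.Adj u w) (h' : T.Adj u w')
    (hd : T.dist a u = T.dist a w + 1) (hd' : T.dist a u = T.dist a w' + 1) : w = w' := by
  obtain ⟨p, hp, hpl⟩ := hT.connected.exists_path_of_dist w a
  obtain ⟨q, hq, hql⟩ := hT.connected.exists_path_of_dist w' a
  have key : ∀ {z : V} (r : T.Walk z a) (_ : T.Adj u z) (_ : r.length = T.dist z a)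
      (_ : T.dist a u = T.dist a z + 1), ∃ s : T.Walk u a, s.IsPath ∧ s.snd = z := by
    intro z r hz hr hzd
    refine ⟨SimpleGraph.Walk.cons hz r, ?_, by simp⟩
    apply SimpleGraph.Walk.isPath_of_length_eq_dist
    rw [SimpleGraph.Walk.length_cons, hr, T.dist_comm (u := z), T.dist_comm (u := u), hzd]
  obtain ⟨s, hs, rfl⟩ := key p h hpl hd
  obtain ⟨s', hs', rfl⟩ := key q h' hql hd'
  rw [(hT.existsUnique_path u a).unique hs hs']

/-- Every distance up to `dist a b` is realised on a geodesic. -/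
lemma exists_between (hT : T.Connected) (a b : V) (k : ℕ) (hk : k ≤ T.dist a b) :
    ∃ z, T.dist a z = k ∧ k + T.dist z b = T.dist a b := by
  induction hn : T.dist a b - k generalizing b with
  | zero =>
    exact ⟨b, by omega, by rw [T.dist_self]; omega⟩
  | succ m ih =>
    have hb : b ≠ a := by rintro rfl; rw [T.dist_self] at hn; omega
    obtain ⟨c, hc, hcd⟩ := exists_closer hT hb
    obtain ⟨z, hz, hzc⟩ := ih c (by omega) (by omega)
    refine ⟨z, hz, ?_⟩
    have h1 : T.dist z b ≤ T.dist z c + T.dist c b := hT.dist_triangle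
    have h2 : T.dist c b = 1 := SimpleGraph.dist_eq_one_iff_adj.2 hc.symm
    have h3 : T.dist a b ≤ T.dist a z + T.dist z b := hT.dist_triangle
    omega

/-- Local-to-global principle for geodesics in a tree: if the first step from `x` towards `y`
increases the distance to `v`, then `x` lies between `y` and `v`. -/
lemma between_of_step (hT : T.IsTree) {v y : V} (x b : V) (hb : T.Adj x b)
    (hv : T.dist v b = T.dist v x + 1) (hy : T.dist y x = T.dist y b + 1) :
    T.dist y v = T.dist y x + T.dist x v := by
  induction hn : T.dist y b generalizing x b with
  | zero =>
    have : y = b := hT.connected.dist_eq_zero_iff.1 hn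
    subst this
    rw [T.dist_comm (u := y), hv, hy, hn, T.dist_comm (u := v)]; omega
  | succ m ih =>
    have hby : b ≠ y := by rintro rfl; rw [T.dist_self] at hn; omega
    obtain ⟨c, hc, hcd⟩ := exists_closer hT.connected hby
    have hcv : T.dist v c = T.dist v b + 1 := by
      rcases hT.dist_eq_dist_add_one_of_adj v hc with h | h
      · have := closer_unique hT hc hb.symm h hv
        subst this; omega
      · exact h
    have := ih b c hc hcv hcd (by omega)
    rw [this, T.dist_comm (u := b), hv, hy, T.dist_comm (u := x)]; omega

/-- Points of a geodesic are determined by their distance to one end. -/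
lemma between_unique (hT : T.IsTree) {a b : V} (z z' : V)
    (hz : T.dist a z + T.dist z b = T.dist a b) (hz' : T.dist a z' + T.dist z' b = T.dist a b)
    (h : T.dist a z = T.dist a z') : z = z' := by
  induction hn : T.dist z b generalizing z z' with
  | zero =>
    rw [hT.connected.dist_eq_zero_iff.1 hn, hT.connected.dist_eq_zero_iff.1 (by omega :
      T.dist z' b = 0)]
  | succ m ih =>
    have step : ∀ w, T.dist a w + T.dist w b = T.dist a b → T.dist w b = m + 1 →
        ∃ t, T.Adj w t ∧ T.dist t b = m ∧ T.dist a t = T.dist a w + 1 ∧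
          T.dist a t + T.dist t b = T.dist a b := by
      intro w hw hwm
      have hwb : w ≠ b := by rintro rfl; rw [T.dist_self] at hwm; omega
      obtain ⟨t, ht, htd⟩ := exists_closer hT.connected hwb
      rw [T.dist_comm (u := b), T.dist_comm (u := b)] at htd
      have h1 : T.dist a b ≤ T.dist a t + T.dist t b := hT.connected.dist_triangle
      rcases hT.dist_eq_dist_add_one_of_adj a ht with h2 | h2
      · omega
      · exact ⟨t, ht, by omega, h2, by omega⟩
    obtain ⟨t, ht, ht1, ht2, ht3⟩ := step z hz hn
    obtain ⟨t', ht', ht1', ht2', ht3'⟩ := step z' hz' (by omega)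
    have := ih t t' ht3 ht3' (by omega) ht1
    subst this
    exact closer_unique hT ht.symm ht'.symm ht2 (by omega)

/-- A tree is bipartite, so the perimeter of every triple is even. -/
lemma even_perimeter (hT : T.IsTree) (x y v : V) :
    Even (T.dist x v + T.dist y v + T.dist x y) := by
  induction hn : T.dist x v generalizing v with
  | zero =>
    have := hT.connected.dist_eq_zero_iff.1 hn
    subst this
    rw [T.dist_comm (u := y), zero_add]; exact ⟨_, rfl⟩
  | succ m ih =>
    have hv : v ≠ x := by rintro rfl; rw [T.dist_self] at hn; omega
    obtain ⟨w, hw, hwd⟩ := exists_closer hT.connected hv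
    have h1 := ih w (by omega)
    rw [Nat.even_iff] at *
    rcases hT.dist_eq_dist_add_one_of_adj y hw with h | h <;> omega

/-- The path joining `a` to `b` in a tree consists of the points between `a` and `b`. -/
lemma exists_path_support (hT : T.IsTree) (a b : V) :
    ∃ p : T.Walk a b, p.IsPath ∧
      ∀ z, z ∈ p.support ↔ T.dist a z + T.dist z b = T.dist a b := by
  classical
  obtain ⟨p, hp, hpl⟩ := hT.connected.exists_path_of_dist a b
  refine ⟨p, hp, fun z => ⟨fun hz => ?_, fun hz => ?_⟩⟩
  · have h1 := congrArg SimpleGraph.Walk.length (p.take_spec hz)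
    rw [SimpleGraph.Walk.length_append] at h1
    have h2 := T.dist_le (p.takeUntil z hz)
    have h3 := T.dist_le (p.dropUntil z hz)
    have h4 : T.dist a b ≤ T.dist a z + T.dist z b := hT.connected.dist_triangle
    omega
  · obtain ⟨q, hq⟩ := hT.connected.exists_walk_length_eq_dist a z
    obtain ⟨r, hr⟩ := hT.connected.exists_walk_length_eq_dist z b
    have h1 : (q.append r).IsPath := by
      apply SimpleGraph.Walk.isPath_of_length_eq_dist
      rw [SimpleGraph.Walk.length_append]; omega
    rw [(hT.existsUnique_path a b).unique hp h1, SimpleGraph.Walk.mem_support_append_iff]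
    exact Or.inl q.end_mem_support

end Tree

/-! ### Sums of distances -/

section Sums

variable {V : Type*} [Fintype V] {T : SimpleGraph V}

open Classical in
lemma dist_add_one_le (hT : T.Connected) (a b : V) :
    T.dist a b + 1 ≤ ∑ w, if T.dist a w + T.dist w b = T.dist a b then 1 else 0 := by
  rw [← Finset.card_filter]
  have : range (T.dist a b + 1) ⊆
      (univ.filter fun w => T.dist a w + T.dist w b = T.dist a b).image (T.dist a) := by
    intro k hk
    obtain ⟨z, hz, hz'⟩ := exists_between hT a b k (by simpa [Nat.lt_succ_iff] using hk)
    exact mem_image.2 ⟨z, by simp [hz, hz'], hz⟩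
  calc T.dist a b + 1 = #(range (T.dist a b + 1)) := by simp
    _ ≤ _ := card_le_card this
    _ ≤ _ := card_image_le

/-- The distances from `y` sum to at most `n (n - 1) / 2`: writing `dist y v` as the number of
points `w ≠ y` between `y` and `v`, every unordered pair `{v, w}` is counted at most once. Pairs
from `P × Q`, of which neither point lies between `y` and the other, are not counted at all. -/
lemma sum_dist_le (hT : T.Connected) (y : V) (P Q : Finset V)
    (hPQ : ∀ u ∈ P, ∀ w ∈ Q, T.dist y u + T.dist u w ≠ T.dist y w ∧
      T.dist y w + T.dist w u ≠ T.dist y u) :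
    2 * ∑ v, T.dist y v + 2 * (#P * #Q) + Fintype.card V ≤ Fintype.card V * Fintype.card V := by
  classical
  set B : V → V → ℕ := fun v w => if T.dist y w + T.dist w v = T.dist y v then 1 else 0 with hB
  have h1 : ∑ v, (T.dist y v + 1) ≤ ∑ v, ∑ w, B v w :=
    sum_le_sum fun v _ => dist_add_one_le hT y v
  have hpt : ∀ v w, B v w + B w v + ((if v ∈ P then 1 else 0) * (if w ∈ Q then 1 else 0) +
      (if v ∈ Q then 1 else 0) * (if w ∈ P then 1 else 0)) ≤ 1 + if v = w then 1 else 0 := by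
    intro v w
    by_cases hvw : v = w
    · subst hvw
      have hv : ¬ (v ∈ P ∧ v ∈ Q) := fun h => (hPQ v h.1 v h.2).1 (by simp)
      have hBv : B v v ≤ 1 := by simp only [hB]; split_ifs <;> omega
      by_cases hp : v ∈ P
      · have hq : v ∉ Q := fun h => hv ⟨hp, h⟩
        simp [hp, hq]; omega
      · simp [hp]; omega
    · have hpos : 0 < T.dist v w := hT.pos_dist_of_ne hvw
      have hc := T.dist_comm (u := v) (v := w)
      have hBB : B v w + B w v ≤ 1 := by
        simp only [hB]; split_ifs <;> omega
      by_cases h1 : v ∈ P ∧ w ∈ Q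
      · obtain ⟨e1, e2⟩ := hPQ v h1.1 w h1.2
        have hz : B v w + B w v = 0 := by simp only [hB, if_neg e1, if_neg e2]
        by_cases h2 : v ∈ Q ∧ w ∈ P
        · exact absurd (by simp) (hPQ v h1.1 v h2.1).1
        · have : (if v ∈ Q then 1 else 0) * (if w ∈ P then 1 else 0) = 0 := by
            rcases not_and_or.1 h2 with h | h <;> simp [h]
          rw [this, hz]; simp [h1.1, h1.2, hvw]
      · have t1 : (if v ∈ P then 1 else 0) * (if w ∈ Q then 1 else 0) = 0 := by
          rcases not_and_or.1 h1 with h | h <;> simp [h]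
        by_cases h2 : v ∈ Q ∧ w ∈ P
        · obtain ⟨e1, e2⟩ := hPQ w h2.2 v h2.1
          have hz : B v w + B w v = 0 := by simp only [hB, if_neg e1, if_neg e2]
          rw [t1, hz]; simp [h2.1, h2.2, hvw]
        · have t2 : (if v ∈ Q then 1 else 0) * (if w ∈ P then 1 else 0) = 0 := by
            rcases not_and_or.1 h2 with h | h <;> simp [h]
          rw [t1, t2]; omega
  have h2 := sum_le_sum fun v (_ : v ∈ univ) => sum_le_sum fun w (_ : w ∈ univ) => hpt v w
  simp only [sum_add_distrib, ← mul_sum, ← sum_mul] at h2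
  rw [sum_comm (f := fun v w => B w v)] at h2
  simp only [sum_add_distrib] at h1
  simp at h1 h2
  nlinarith

/-- The Wiener bound `(n³ - n) / 3`: at most one of three distinct points lies between the
others. -/
lemma sum_sum_dist_le (hT : T.Connected) :
    3 * ∑ u, ∑ v, T.dist u v + Fintype.card V ≤ Fintype.card V ^ 3 := by
  classical
  set B : V → V → V → ℕ :=
    fun u v w => if T.dist u w + T.dist w v = T.dist u v then 1 else 0 with hB
  have h1 : ∑ u, ∑ v, (T.dist u v + 1) ≤ ∑ u, ∑ v, ∑ w, B u v w :=
    sum_le_sum fun u _ => sum_le_sum fun v _ => dist_add_one_le hT u v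
  have hpt : ∀ u v w, B u v w + B v w u + B w u v + (if u = v then if v = w then 1 else 0 else 0)
      ≤ 1 + (if u = v then 1 else 0) + (if v = w then 1 else 0) + (if u = w then 1 else 0) := by
    intro u v w
    have c1 := T.dist_comm (u := u) (v := v)
    have c2 := T.dist_comm (u := v) (v := w)
    have c3 := T.dist_comm (u := u) (v := w)
    by_cases huv : u = v
    · subst huv
      by_cases huw : u = w
      · subst huw; simp [hB]
      · have hpos : 0 < T.dist u w := hT.pos_dist_of_ne huw
        simp only [hB, T.dist_self, huw, if_true, if_false]; split_ifs <;> omega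
    · have hpos : 0 < T.dist u v := hT.pos_dist_of_ne huv
      by_cases hvw : v = w
      · subst hvw; simp only [hB, T.dist_self, huv, if_true, if_false]; split_ifs <;> omega
      · have hpos2 : 0 < T.dist v w := hT.pos_dist_of_ne hvw
        by_cases huw : u = w
        · subst huw; simp only [hB, T.dist_self, huv, hvw, if_true, if_false]; split_ifs <;> omega
        · have hpos3 : 0 < T.dist u w := hT.pos_dist_of_ne huw
          simp only [hB, huv, hvw, huw, if_false]; split_ifs <;> omega
  have h2 := sum_le_sum fun u (_ : u ∈ univ) => sum_le_sum fun v (_ : v ∈ univ) =>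
    sum_le_sum fun w (_ : w ∈ univ) => hpt u v w
  simp only [sum_add_distrib] at h1 h2
  have e1 : ∑ u, ∑ v, ∑ w, B v w u = ∑ u, ∑ v, ∑ w, B u v w := by
    rw [sum_comm]; exact sum_congr rfl fun v _ => sum_comm
  have e2 : ∑ u, ∑ v, ∑ w, B w u v = ∑ u, ∑ v, ∑ w, B u v w := by
    rw [sum_congr rfl fun u _ => sum_comm]; exact sum_comm
  rw [e1, e2] at h2
  simp at h1 h2
  nlinarith

end Sums

/-! ### The contribution of one cycle -/

section Level

variable {V : Type*} {T : SimpleGraph V}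

/-- The position, counted from `x`, at which the branch containing `v` is attached to the path
from `x` to `y` in the tree `T`. -/
noncomputable def lev (T : SimpleGraph V) (x y v : V) : ℝ :=
  ((T.dist x v : ℝ) - T.dist y v + T.dist x y) / 2

/-- The level as a natural number. -/
lemma exists_nat_lev (hT : T.IsTree) (x y : V) :
    ∃ h : V → ℕ, ∀ v, 2 * h v + T.dist y v = T.dist x v + T.dist x y ∧ h v ≤ T.dist x y ∧
      lev T x y v = h v := by
  refine ⟨fun v => (T.dist x v + T.dist x y - T.dist y v) / 2, fun v => ?_⟩
  have h1 := even_perimeter hT x y v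
  have h2 : T.dist y v ≤ T.dist y x + T.dist x v := hT.connected.dist_triangle
  have h3 : T.dist x v ≤ T.dist x y + T.dist y v := hT.connected.dist_triangle
  rw [T.dist_comm (u := y) (v := x)] at h2
  rw [Nat.even_iff] at h1
  have h4 : 2 * ((T.dist x v + T.dist x y - T.dist y v) / 2) + T.dist y v =
      T.dist x v + T.dist x y := by omega
  refine ⟨h4, by dsimp only; omega, ?_⟩
  have h5 := congrArg (Nat.cast : ℕ → ℝ) h4
  push_cast at h5
  rw [lev]
  push_cast
  linarith

/-- If `u` is attached at `x` and `w` at the next vertex `b` of the path from `x` to `y`, then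
neither of `u` and `w ≠ b` lies between `y` and the other. -/
lemma not_between (hT : T.IsTree) {x y b u w : V}
    (hb : T.dist x b = 1) (hby : 1 + T.dist b y = T.dist x y)
    (hu : T.dist y u = T.dist x u + T.dist x y) (hw : 2 + T.dist y w = T.dist x w + T.dist x y)
    (hwb : w ≠ b) :
    T.dist y u + T.dist u w ≠ T.dist y w ∧ T.dist y w + T.dist w u ≠ T.dist y u := by
  have hxw : T.dist x w ≤ T.dist x u + T.dist u w := hT.connected.dist_triangle
  have cyb := T.dist_comm (u := y) (v := b)
  have cxy := T.dist_comm (u := y) (v := x)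
  refine ⟨by omega, fun h => ?_⟩
  have hwx : x ≠ w := by rintro rfl; rw [T.dist_self] at hw; omega
  obtain ⟨t, ht, htd⟩ := exists_closer hT.connected hwx
  -- the geodesic from `w` to `u` passes through `x`
  have hbet : T.dist w u = T.dist w x + T.dist x u := by
    rcases hT.dist_eq_dist_add_one_of_adj u ht with h1 | h1
    · have e : T.dist y t = T.dist y x + 1 := by
        have h2 : T.dist y u ≤ T.dist y t + T.dist t u := hT.connected.dist_triangle
        have c1 := T.dist_comm (u := t) (v := u)
        have c2 := T.dist_comm (u := x) (v := u)
        rcases hT.dist_eq_dist_add_one_of_adj y ht with h3 | h3 <;> omega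
      have h4 := between_of_step hT x t ht e htd
      have c1 := T.dist_comm (u := w) (v := y)
      have c2 := T.dist_comm (u := w) (v := x)
      omega
    · exact between_of_step hT x t ht h1 htd
  have c2 := T.dist_comm (u := w) (v := x)
  exact hwb (closer_unique hT (a := y) (SimpleGraph.dist_eq_one_iff_adj.1 (by omega))
    (SimpleGraph.dist_eq_one_iff_adj.1 hb) (by omega) (by omega))

lemma sum_range_id_real (p : ℕ) : ∑ i ∈ range p, (i : ℝ) = p * (p - 1) / 2 := by
  induction p with
  | zero => simp
  | succ k ih => rw [sum_range_succ, ih]; push_cast; ring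

lemma sum_range_sq_real (p : ℕ) :
    ∑ i ∈ range p, (i : ℝ) ^ 2 = p * (p - 1) * (2 * p - 1) / 6 := by
  induction p with
  | zero => simp
  | succ k ih => rw [sum_range_succ, ih]; push_cast; ring

lemma sum_sum_sub_sq {ι : Type*} [Fintype ι] (f : ι → ℝ) :
    ∑ u, ∑ v, (f u - f v) ^ 2 = 2 * (Fintype.card ι * ∑ u, f u ^ 2 - (∑ u, f u) ^ 2) := by
  simp only [sub_sq, sum_add_distrib, sum_sub_distrib, ← mul_sum, ← sum_mul, sum_const, card_univ,
    nsmul_eq_mul]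
  ring

/-- The bound for one cycle of length `p = dist x y + 1 ≥ 3` with at least three vertices at level
`0`. The deficit is compared with that of the smallest configuration, with three vertices at level
`0` and one at each positive level. The additional vertices enter through a quadratic form in their
levels, handled by the Cauchy-Schwarz inequality, and a sum of one term per vertex. This term is
nonnegative except for `p = 3` at level `1`, where the loss is compensated by the sum of the
distances from `y`, which is then not maximal. -/
lemma cycle_bound [Fintype V] (hT : T.IsTree) {x y : V} (hxy : 2 ≤ T.dist x y) (W : Finset V)
    (hW : #W = 3) (hWx : ∀ w ∈ W, T.dist y w = T.dist x w + T.dist x y) :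
    (∑ v, (T.dist x v : ℝ)) + (∑ v, (T.dist y v : ℝ)) -
      (2 * ∑ u, ∑ v, (lev T x y u - lev T x y v) ^ 2 + 2 * ∑ v, lev T x y v ^ 2) /
        (T.dist x y + 1) ≤
    Fintype.card V * (Fintype.card V - 1) - (26 * Fintype.card V - 44) / 3 := by
  classical
  obtain ⟨h, hh⟩ := exists_nat_lev hT x y
  set D := T.dist x y with hD
  have hz : ∀ k, ∃ z, k ≤ D → T.dist x z = k ∧ k + T.dist z y = D := by
    intro k
    by_cases hk : k ≤ D
    · obtain ⟨z, hz⟩ := exists_between hT.connected x y k hk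
      exact ⟨z, fun _ => hz⟩
    · exact ⟨x, fun h => absurd h hk⟩
  choose z hz using hz
  have hhz : ∀ k, k ≤ D → h (z k) = k := by
    intro k hk
    have h1 := (hh (z k)).1
    have h2 := hz k hk
    rw [T.dist_comm (u := y)] at h1
    omega
  have hhW : ∀ w ∈ W, h w = 0 := by
    intro w hw
    have h1 := (hh w).1
    have h2 := hWx w hw
    omega
  -- the smallest configuration: the three vertices of `W` and one vertex at each positive level
  set U : Finset V := W ∪ (Icc 1 D).image z with hU
  have hUsum : ∀ g : ℕ → ℝ, ∑ u ∈ U, g (h u) = ∑ i ∈ range (D + 1), g i + 2 * g 0 := by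
    intro g
    rw [hU, sum_union, sum_image, sum_congr rfl (fun w hw => by rw [hhW w hw]), sum_const, hW,
      sum_congr rfl (fun k hk => by rw [hhz k (mem_Icc.1 hk).2]),
      show range (D + 1) = insert 0 (Icc 1 D) by ext; simp; omega, sum_insert (by simp)]
    · simp only [nsmul_eq_mul]; push_cast; ring
    · intro k hk l hl hkl
      rw [← hhz k (mem_Icc.1 hk).2, ← hhz l (mem_Icc.1 hl).2, hkl]
    · rw [disjoint_left]
      intro w hw hw'
      obtain ⟨k, hk, rfl⟩ := mem_image.1 hw'
      have := hhW _ hw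
      rw [hhz k (mem_Icc.1 hk).2] at this
      have := (mem_Icc.1 hk).1
      omega
  set p : ℝ := (D : ℝ) + 1 with hp
  have hpD : ((D + 1 : ℕ) : ℝ) = p := by push_cast; rfl
  have hp3 : 3 ≤ p := by
    have : (2 : ℝ) ≤ D := by exact_mod_cast hxy
    rw [hp]; linarith
  set C : Finset V := univ \ U with hC
  have hsplit : ∀ g : ℕ → ℝ, ∑ v, g (h v) = ∑ v ∈ C, g (h v) +
      (∑ i ∈ range (D + 1), g i + 2 * g 0) := fun g => by
    rw [← hUsum, hC, sum_sdiff (subset_univ U)]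
  have hn := hsplit (fun _ => 1)
  have hH := hsplit (fun k => (k : ℝ))
  have hH2 := hsplit (fun k => (k : ℝ) ^ 2)
  beta_reduce at hn hH hH2
  rw [sum_range_id_real, hpD] at hH
  rw [sum_range_sq_real, hpD] at hH2
  simp only [sum_const, card_univ, card_range, nsmul_eq_mul, mul_one, hpD] at hn
  simp only [Nat.cast_zero, mul_zero, add_zero, ne_eq, OfNat.ofNat_ne_zero, not_false_eq_true,
    zero_pow] at hH hH2
  have hCS : (∑ v ∈ C, (h v : ℝ)) ^ 2 ≤ #C * ∑ v ∈ C, (h v : ℝ) ^ 2 := sq_sum_le_card_mul_sum_sq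
  -- `M` counts the additional vertices at level `1` when `p = 3`
  obtain ⟨M, hM0, hMS, hMg⟩ : ∃ M : ℝ, 0 ≤ M ∧
      2 * (∑ v, (T.dist y v : ℝ)) + 6 * M + Fintype.card V ≤
        (Fintype.card V : ℝ) * Fintype.card V ∧
      0 ≤ 6 * M * p + ((4 * p + 10) * ∑ v ∈ C, (h v : ℝ) ^ 2
        - (4 * p ^ 2 - 2 * p) * ∑ v ∈ C, (h v : ℝ) + p * (4 * p ^ 2 - 3 * p - 27) / 3 * #C) := by
    have hg : ∀ c : ℝ, (∀ v ∈ C, -(c * if h v = 1 then 1 else 0) ≤ (4 * p + 10) * (h v : ℝ) ^ 2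
        - (4 * p ^ 2 - 2 * p) * (h v : ℝ) + p * (4 * p ^ 2 - 3 * p - 27) / 3) →
        -(c * #(C.filter fun v => h v = 1)) ≤ (4 * p + 10) * ∑ v ∈ C, (h v : ℝ) ^ 2
        - (4 * p ^ 2 - 2 * p) * ∑ v ∈ C, (h v : ℝ) + p * (4 * p ^ 2 - 3 * p - 27) / 3 * #C := by
      intro c hc
      have := sum_le_sum hc
      simp only [sum_add_distrib, sum_sub_distrib, ← mul_sum, sum_neg_distrib, sum_const,
        nsmul_eq_mul, sum_boole] at this
      linarith
    by_cases hD3 : D = 2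
    · have hp3' : p = 3 := by rw [hp, hD3]; norm_num
      refine ⟨#(C.filter fun v => h v = 1), by positivity, ?_, ?_⟩
      · have := sum_dist_le hT.connected y W (C.filter fun v => h v = 1) (by
          intro u hu w hw
          obtain ⟨hwC, hw1⟩ := mem_filter.1 hw
          have h1 := (hh w).1
          have h2 := hz 1 (by omega)
          refine not_between hT h2.1 h2.2 (hWx u hu) (by omega) ?_
          rintro rfl
          exact (mem_sdiff.1 hwC).2 (mem_union_right _ (mem_image_of_mem _ (by simp; omega))))
        rw [hW] at this
        have := (Nat.cast_le (α := ℝ)).2 this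
        push_cast at this
        linarith
      · have := hg 8 (by
          intro v _
          have h2 : h v ≤ 2 := hD3 ▸ (hh v).2.1
          rw [hp3']
          interval_cases h v <;> norm_num)
        have hM : (0 : ℝ) ≤ #(C.filter fun v => h v = 1) := by positivity
        rw [hp3'] at this ⊢
        linarith
    · have hp4 : 4 ≤ p := by
        have : (3 : ℝ) ≤ D := by exact_mod_cast (by omega : 3 ≤ D)
        rw [hp]; linarith
      refine ⟨0, le_rfl, ?_, ?_⟩
      · have := (Nat.cast_le (α := ℝ)).2 (sum_dist_le hT.connected y ∅ ∅ (by simp))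
        push_cast at this
        simpa using this
      · have := hg 0 (by
          intro v _
          have h3 : 0 ≤ (4 * p + 10) * ((4 * p + 10) * (h v : ℝ) ^ 2
              - (4 * p ^ 2 - 2 * p) * (h v : ℝ) + p * (4 * p ^ 2 - 3 * p - 27) / 3) := by
            have h4 : 0 ≤ p * (4 * p ^ 3 + 40 * p ^ 2 - 141 * p - 270) := by
              apply mul_nonneg (by linarith)
              nlinarith [mul_nonneg (sub_nonneg.2 hp4) (sub_nonneg.2 hp4),
                mul_nonneg (mul_nonneg (sub_nonneg.2 hp4) (sub_nonneg.2 hp4)) (sub_nonneg.2 hp4)]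
            nlinarith [sq_nonneg ((4 * p + 10) * (h v : ℝ) - (2 * p ^ 2 - p))]
          have := nonneg_of_mul_nonneg_right h3 (by linarith)
          linarith)
        linarith
  have hx : ∑ v, (T.dist x v : ℝ) =
      2 * (∑ v, (h v : ℝ)) + (∑ v, (T.dist y v : ℝ)) - (p - 1) * Fintype.card V := by
    have : ∀ v, (T.dist x v : ℝ) = 2 * (h v : ℝ) + T.dist y v - (p - 1) := by
      intro v
      have := congrArg (Nat.cast : ℕ → ℝ) (hh v).1
      push_cast at this
      rw [hp]; linarith
    rw [sum_congr rfl fun v _ => this v]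
    simp only [sum_add_distrib, sum_sub_distrib, ← mul_sum, sum_const, card_univ, nsmul_eq_mul]
    ring
  rw [sum_congr rfl fun u _ => sum_congr rfl fun v _ => by rw [(hh u).2.2, (hh v).2.2],
    sum_congr (s₁ := univ) (f := fun v => lev T x y v ^ 2) rfl fun v _ => by rw [(hh v).2.2],
    sum_sum_sub_sq, hx]
  generalize (∑ v, (T.dist y v : ℝ)) = S at *
  generalize (∑ v, (h v : ℝ)) = H at *
  generalize (∑ v, (h v : ℝ) ^ 2) = H2 at *
  generalize (∑ v ∈ C, (h v : ℝ)) = a at *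
  generalize (∑ v ∈ C, (h v : ℝ) ^ 2) = b at *
  generalize (#C : ℝ) = c at *
  generalize (Fintype.card V : ℝ) = n at *
  have hpp : 0 < p := by linarith
  rw [sub_le_iff_le_add, ← sub_le_iff_le_add', le_div_iff₀ hpp]
  -- the smallest configuration
  have hbase : 0 ≤ p ^ 2 * (p ^ 2 - 1) / 3 + 5 * (p - 1) * p * (2 * p - 1) / 3 + 2 * p * (p - 1)
      - (p + 2) * 26 * p / 3 + 44 * p / 3 := by
    have : 0 ≤ p * (p - 3) * (p ^ 2 + 13 * p + 3) :=
      mul_nonneg (mul_nonneg hpp.le (by linarith)) (by nlinarith)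
    linarith
  have hpM := mul_le_mul_of_nonneg_left hMS hpp.le
  subst hn hH hH2
  linarith

end Level

/-! ### Potentials and effective resistances -/

section Potential

variable {V : Type*}

open Classical in
/-- The indicator function of the vertex `a`. -/
noncomputable def dl (a u : V) : ℝ := if u = a then 1 else 0

lemma dl_self (a : V) : dl a a = 1 := by simp [dl]

lemma dl_ne {a u : V} (h : u ≠ a) : dl a u = 0 := by simp [dl, h]

open Classical in
/-- The current along each edge driven by the potential `g`. -/
noncomputable def cur (G : SimpleGraph V) (g : V → ℝ) (u v : V) : ℝ :=
  if G.Adj u v then g u - g v else 0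

lemma cur_antisymm (G : SimpleGraph V) (g : V → ℝ) (u v : V) : cur G g u v = -cur G g v u := by
  unfold cur
  by_cases h : G.Adj u v
  · simp [h, h.symm]
  · simp [h, mt (fun e : G.Adj v u => e.symm) h]

variable [Fintype V]

lemma sum_dl_mul (a : V) (g : V → ℝ) : ∑ u, dl a u * g u = g a := by
  classical
  simp [dl, ite_mul]

/-- The graph Laplacian of `G` applied to `g`. -/
noncomputable def lap (G : SimpleGraph V) (g : V → ℝ) (u : V) : ℝ := ∑ v, cur G g u v

lemma sum_sum_antisymm {f : V → V → ℝ} (hf : ∀ u v, f u v = -f v u) (φ : V → ℝ) :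
    ∑ u, ∑ v, f u v * (φ u - φ v) = 2 * ∑ u, φ u * ∑ v, f u v := by
  have h1 : ∑ u, ∑ v, f u v * φ v = -∑ u, ∑ v, f u v * φ u := by
    rw [sum_comm, ← sum_neg_distrib]
    refine sum_congr rfl fun u _ => ?_
    rw [← sum_neg_distrib]
    exact sum_congr rfl fun v _ => by rw [hf v u]; ring
  have h2 : ∑ u, φ u * ∑ v, f u v = ∑ u, ∑ v, f u v * φ u :=
    sum_congr rfl fun u _ => by rw [mul_sum]; exact sum_congr rfl fun v _ => mul_comm _ _
  simp only [mul_sub, sum_sub_distrib]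
  rw [h1, h2]; ring

/-- Green's identity. -/
lemma sum_mul_lap (G : SimpleGraph V) (φ g : V → ℝ) :
    2 * ∑ u, φ u * lap G g u = ∑ u, ∑ v, cur G g u v * (φ u - φ v) :=
  (sum_sum_antisymm (cur_antisymm G g) φ).symm

lemma sum_lap (G : SimpleGraph V) (g : V → ℝ) : ∑ u, lap G g u = 0 := by
  have := sum_mul_lap G (fun _ => 1) g
  simpa using this

lemma eRes_self (G : SimpleGraph V) (a : V) : eRes G a a = 0 := by
  rw [eRes]
  convert Real.sInf_empty
  refine Set.eq_empty_of_forall_notMem ?_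
  rintro E ⟨f, hf, -, hd, ha, -⟩
  have h1 := sum_sum_antisymm hf (fun _ => 1)
  simp only [sub_self, mul_zero, sum_const_zero, one_mul] at h1
  rw [Fintype.sum_eq_single a fun u hu => hd u hu hu, ha] at h1
  norm_num at h1

/-- Thomson's principle: a potential whose Laplacian is `δ_a - δ_b` computes the effective
resistance. -/
lemma eRes_eq {G : SimpleGraph V} {a b : V} (hab : a ≠ b) (φ : V → ℝ)
    (hφ : ∀ u, lap G φ u = dl a u - dl b u) : eRes G a b = φ a - φ b := by
  have hsum : ∀ g : V → ℝ, (∀ u, g u = dl a u - dl b u) → ∑ u, φ u * g u = φ a - φ b := by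
    intro g hg
    rw [sum_congr rfl fun u _ => by rw [hg u, mul_comm, sub_mul], sum_sub_distrib, sum_dl_mul,
      sum_dl_mul]
  have hcur : ∀ f : V → V → ℝ, (∀ u v, ¬ G.Adj u v → f u v = 0) →
      ∑ u, ∑ v, f u v * cur G φ u v = ∑ u, ∑ v, f u v * (φ u - φ v) := by
    intro f hf
    refine sum_congr rfl fun u _ => sum_congr rfl fun v _ => ?_
    by_cases h : G.Adj u v
    · simp [cur, h]
    · simp [hf u v h]
  have hz : ∀ u v, ¬ G.Adj u v → cur G φ u v = 0 := fun u v h => by simp [cur, h]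
  have hE : ∑ u, ∑ v, cur G φ u v * cur G φ u v = 2 * (φ a - φ b) := by
    rw [hcur _ hz, sum_sum_antisymm (cur_antisymm G φ)]
    exact congrArg (2 * ·) (hsum _ hφ)
  refine IsLeast.csInf_eq ⟨⟨cur G φ, cur_antisymm G φ, hz, fun v hva hvb => ?_, ?_, ?_⟩, ?_⟩
  · rw [← lap, hφ, dl_ne hva, dl_ne hvb, sub_zero]
  · rw [← lap, hφ, dl_self, dl_ne hab, sub_zero]
  · simp only [pow_two]; rw [hE]; ring
  · rintro E ⟨f, hf, hfz, hd, ha, rfl⟩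
    have hdiv : ∀ u, ∑ v, f u v = dl a u - dl b u := by
      have h0 := sum_sum_antisymm hf (fun _ => 1)
      simp only [sub_self, mul_zero, sum_const_zero, one_mul] at h0
      rw [Fintype.sum_eq_add a b hab fun u hu => hd u hu.1 hu.2, ha] at h0
      intro u
      by_cases hua : u = a
      · rw [hua, ha, dl_self, dl_ne hab, sub_zero]
      by_cases hub : u = b
      · rw [hub, dl_self, dl_ne hab.symm]; linarith
      · rw [hd u hua hub, dl_ne hua, dl_ne hub, sub_zero]
    have h1 : ∑ u, ∑ v, f u v * cur G φ u v = 2 * (φ a - φ b) := by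
      rw [hcur _ hfz, sum_sum_antisymm hf, hsum _ hdiv]
    have h2 : 0 ≤ ∑ u, ∑ v, (f u v - cur G φ u v) ^ 2 := by positivity
    have h3 : ∑ u, ∑ v, (f u v - cur G φ u v) ^ 2 = ∑ u, ∑ v, f u v ^ 2
        - 2 * ∑ u, ∑ v, f u v * cur G φ u v + ∑ u, ∑ v, cur G φ u v * cur G φ u v := by
      simp only [mul_sum, ← sum_sub_distrib, ← sum_add_distrib]
      exact sum_congr rfl fun u _ => sum_congr rfl fun v _ => by ring
    linarith

lemma lap_comb (G : SimpleGraph V) (f g : V → ℝ) (c d : ℝ) (u : V) :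
    lap G (fun v => c * f v + d * g v) u = c * lap G f u + d * lap G g u := by
  simp only [lap, mul_sum, ← sum_add_distrib]
  refine sum_congr rfl fun v _ => ?_
  unfold cur
  split_ifs <;> ring

open Classical in
lemma vdeg_eq_sum (G : SimpleGraph V) (u : V) :
    (vdeg G u : ℝ) = ∑ v, if G.Adj u v then (1 : ℝ) else 0 := by
  rw [vdeg, Nat.card_eq_fintype_card, sum_boole, Fintype.card_subtype]
  simp [SimpleGraph.mem_neighborSet]

/-- Summing over the neighbours of a vertex after adding the edge `xy`. -/
lemma sum_add_edge {G H : SimpleGraph V} {x y : V} (hxy : x ≠ y) (hG : ¬ G.Adj x y)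
    (hH : ∀ u v, H.Adj u v ↔ G.Adj u v ∨ s(u, v) = s(x, y)) (f : V → ℝ) (u : V) :
    open Classical in
    (∑ v, if H.Adj u v then f v else 0) =
      (∑ v, if G.Adj u v then f v else 0) + (dl x u * f y + dl y u * f x) := by
  classical
  have h : ∀ v, (if H.Adj u v then f v else 0) =
      (if G.Adj u v then f v else 0) + (dl y v * (dl x u * f v) + dl x v * (dl y u * f v)) := by
    intro v
    have hG' : ¬ G.Adj y x := fun h => hG h.symm
    simp only [hH, Sym2.eq_iff, dl]
    by_cases h1 : u = x <;> by_cases h2 : u = y <;> by_cases h3 : v = x <;> by_cases h4 : v = y <;>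
      simp_all
  rw [sum_congr rfl fun v _ => h v, sum_add_distrib, sum_add_distrib, sum_dl_mul, sum_dl_mul]

lemma lap_add_edge {G H : SimpleGraph V} {x y : V} (hxy : x ≠ y) (hG : ¬ G.Adj x y)
    (hH : ∀ u v, H.Adj u v ↔ G.Adj u v ∨ s(u, v) = s(x, y)) (g : V → ℝ) (u : V) :
    lap H g u = lap G g u + (g x - g y) * (dl x u - dl y u) := by
  unfold lap cur
  rw [sum_add_edge hxy hG hH]
  have h1 : dl x u * g u = dl x u * g x := by
    by_cases h : u = x
    · rw [h]
    · simp [dl_ne h]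
  have h2 : dl y u * g u = dl y u * g y := by
    by_cases h : u = y
    · rw [h]
    · simp [dl_ne h]
  linear_combination h1 + h2

lemma vdeg_add_edge {G H : SimpleGraph V} {x y : V} (hxy : x ≠ y) (hG : ¬ G.Adj x y)
    (hH : ∀ u v, H.Adj u v ↔ G.Adj u v ∨ s(u, v) = s(x, y)) (u : V) :
    (vdeg H u : ℝ) = vdeg G u + (dl x u + dl y u) := by
  rw [vdeg_eq_sum, vdeg_eq_sum, sum_add_edge hxy hG hH]
  ring

/-! ### The Laplacian of a tree -/

variable {T : SimpleGraph V}

lemma lap_dist (hT : T.IsTree) (a u : V) :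
    lap T (fun v => (T.dist a v : ℝ)) u = 2 - vdeg T u - 2 * dl a u := by
  classical
  by_cases hu : u = a
  · rw [hu, dl_self, lap, vdeg_eq_sum]
    have : ∀ v, cur T (fun v => (T.dist a v : ℝ)) a v = -if T.Adj a v then (1 : ℝ) else 0 := by
      intro v
      unfold cur
      split_ifs with h
      · simp [SimpleGraph.dist_eq_one_iff_adj.2 h]
      · simp
    rw [sum_congr rfl fun v _ => this v, sum_neg_distrib]
    ring
  · obtain ⟨w, hw, hwd⟩ := exists_closer hT.connected hu
    rw [dl_ne hu, lap, vdeg_eq_sum]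
    have : ∀ v, cur T (fun v => (T.dist a v : ℝ)) u v =
        dl w v * 2 - if T.Adj u v then (1 : ℝ) else 0 := by
      intro v
      unfold cur
      split_ifs with h
      · by_cases hv : v = w
        · simp only [hv, dl_self, hwd]; push_cast; ring
        · rw [dl_ne hv]
          rcases hT.dist_eq_dist_add_one_of_adj a h with h1 | h1
          · exact absurd (closer_unique hT h hw h1 hwd) hv
          · simp only [h1]; push_cast; ring
      · rw [dl_ne (by rintro rfl; exact h hw)]; ring
    rw [sum_congr rfl fun v _ => this v, sum_sub_distrib, sum_dl_mul w (fun _ => 2)]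
    ring

lemma lap_lev (hT : T.IsTree) (x y u : V) : lap T (lev T x y) u = dl y u - dl x u := by
  have h1 := lap_comb T (fun v => (T.dist x v : ℝ)) (fun v => (T.dist y v : ℝ)) (1 / 2) (-1 / 2) u
  have h2 : lap T (lev T x y) u =
      lap T (fun v => 1 / 2 * (T.dist x v : ℝ) + -1 / 2 * (T.dist y v : ℝ)) u := by
    unfold lap cur lev
    refine sum_congr rfl fun v _ => ?_
    split_ifs <;> ring
  rw [h2, h1, lap_dist hT, lap_dist hT]
  ring

lemma sum_vdeg (hT : T.IsTree) : ∑ u, (vdeg T u : ℝ) = 2 * Fintype.card V - 2 := by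
  obtain ⟨a⟩ := hT.connected.nonempty
  have h := sum_lap T (fun v => (T.dist a v : ℝ))
  rw [sum_congr rfl fun u _ => lap_dist hT a u, sum_sub_distrib, sum_sub_distrib, ← mul_sum] at h
  have h1 := sum_dl_mul a (fun _ => 1)
  simp only [mul_one] at h1
  rw [h1] at h
  simp only [sum_const, card_univ, nsmul_eq_mul] at h
  linarith

lemma sum_vdeg_dist (hT : T.IsTree) (v : V) :
    ∑ u, (vdeg T u : ℝ) * T.dist v u = 2 * ∑ u, (T.dist v u : ℝ) - (Fintype.card V - 1) := by
  classical
  have h := sum_mul_lap T (fun u => (T.dist v u : ℝ)) (fun u => (T.dist v u : ℝ))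
  have h1 : ∀ u w, cur T (fun u => (T.dist v u : ℝ)) u w * ((T.dist v u : ℝ) - T.dist v w) =
      if T.Adj u w then 1 else 0 := by
    intro u w
    unfold cur
    split_ifs with h
    · rcases hT.dist_eq_dist_add_one_of_adj v h with h1 | h1 <;> simp only [h1] <;> push_cast <;>
        ring
    · ring
  rw [sum_congr rfl fun u _ => sum_congr rfl fun w _ => h1 u w,
    sum_congr rfl fun u _ => (vdeg_eq_sum T u).symm, sum_vdeg hT,
    sum_congr rfl fun u _ => by
      rw [lap_dist hT, show (T.dist v u : ℝ) * (2 - vdeg T u - 2 * dl v u) =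
        2 * T.dist v u - vdeg T u * T.dist v u - dl v u * (2 * T.dist v u) by ring],
    sum_sub_distrib, sum_sub_distrib, sum_dl_mul v (fun u => 2 * (T.dist v u : ℝ)),
    ← mul_sum] at h
  simp only [SimpleGraph.dist_self, Nat.cast_zero, mul_zero, sub_zero] at h
  linarith

/-- Along an edge of the tree either the level or `dist x · + dist y ·` is constant, so the
corresponding Green form vanishes. -/
lemma sum_vdeg_lev (hT : T.IsTree) (x y : V) (g : ℝ → ℝ) :
    ∑ u, (vdeg T u : ℝ) * g (lev T x y u) =
      2 * ∑ u, g (lev T x y u) - g (lev T x y x) - g (lev T x y y) := by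
  have h := sum_mul_lap T (fun u => g (lev T x y u))
    (fun v => 1 / 2 * (T.dist x v : ℝ) + 1 / 2 * (T.dist y v : ℝ))
  have h1 : ∀ u w, cur T (fun v => 1 / 2 * (T.dist x v : ℝ) + 1 / 2 * (T.dist y v : ℝ)) u w *
      (g (lev T x y u) - g (lev T x y w)) = 0 := by
    intro u w
    unfold cur
    split_ifs with h
    · rcases hT.dist_eq_dist_add_one_of_adj x h with h1 | h1 <;>
        rcases hT.dist_eq_dist_add_one_of_adj y h with h2 | h2 <;>
          simp [lev, h1, h2] <;> ring_nf <;> simp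
    · ring
  rw [sum_congr rfl fun u _ => sum_congr rfl fun w _ => h1 u w,
    sum_congr rfl fun u _ => by
      rw [lap_comb, lap_dist hT, lap_dist hT,
        show g (lev T x y u) * (1 / 2 * (2 - vdeg T u - 2 * dl x u) +
          1 / 2 * (2 - vdeg T u - 2 * dl y u)) = 2 * g (lev T x y u) -
          vdeg T u * g (lev T x y u) - dl x u * g (lev T x y u) - dl y u * g (lev T x y u) by ring],
    sum_sub_distrib, sum_sub_distrib, sum_sub_distrib, sum_dl_mul x (fun u => g (lev T x y u)),
    sum_dl_mul y (fun u => g (lev T x y u)), ← mul_sum] at h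
  simp only [sum_const_zero] at h
  linarith

end Potential

/-! ### Graphs with two independent cycles -/

section Config

variable {V : Type*} {G T : SimpleGraph V} {x₁ y₁ x₂ y₂ : V}

/-- `G` consists of the spanning tree `T` and the two further edges `x₁y₁` and `x₂y₂`. -/
structure Config (G T : SimpleGraph V) (x₁ y₁ x₂ y₂ : V) : Prop where
  tree : T.IsTree
  ne₁ : x₁ ≠ y₁
  ne₂ : x₂ ≠ y₂
  nadj₁ : ¬ T.Adj x₁ y₁
  nadj₂ : ¬ T.Adj x₂ y₂
  ne : s(x₂, y₂) ≠ s(x₁, y₁)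
  adj : ∀ u v, G.Adj u v ↔ T.Adj u v ∨ s(u, v) = s(x₁, y₁) ∨ s(u, v) = s(x₂, y₂)

lemma Config.swap (c : Config G T x₁ y₁ x₂ y₂) : Config G T x₂ y₂ x₁ y₁ :=
  ⟨c.tree, c.ne₂, c.ne₁, c.nadj₂, c.nadj₁, c.ne.symm, fun u v => by
    rw [c.adj, or_comm (a := s(u, v) = s(x₁, y₁))]⟩

lemma Config.rev₁ (c : Config G T x₁ y₁ x₂ y₂) : Config G T y₁ x₁ x₂ y₂ :=
  ⟨c.tree, c.ne₁.symm, c.ne₂, fun h => c.nadj₁ h.symm, c.nadj₂, by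
    rw [Sym2.eq_swap (a := y₁)]; exact c.ne, fun u v => by
    rw [c.adj, Sym2.eq_swap (a := x₁)]⟩

lemma Config.rev₂ (c : Config G T x₁ y₁ x₂ y₂) : Config G T x₁ y₁ y₂ x₂ := c.swap.rev₁.swap

lemma Config.two_le (c : Config G T x₁ y₁ x₂ y₂) : 2 ≤ T.dist x₁ y₁ := by
  have h1 : T.dist x₁ y₁ ≠ 0 := fun h => c.ne₁ (c.tree.connected.dist_eq_zero_iff.1 h)
  have h2 : T.dist x₁ y₁ ≠ 1 := fun h => c.nadj₁ (SimpleGraph.dist_eq_one_iff_adj.1 h)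
  omega

/-- The graph `G` without the edge `x₂y₂`. -/
lemma Config.exists_mid (c : Config G T x₁ y₁ x₂ y₂) : ∃ H : SimpleGraph V,
    (∀ u v, H.Adj u v ↔ T.Adj u v ∨ s(u, v) = s(x₁, y₁)) ∧ ¬ H.Adj x₂ y₂ ∧
      ∀ u v, G.Adj u v ↔ H.Adj u v ∨ s(u, v) = s(x₂, y₂) := by
  have h : ∀ u v, (T ⊔ SimpleGraph.edge x₁ y₁).Adj u v ↔ T.Adj u v ∨ s(u, v) = s(x₁, y₁) := by
    intro u v
    rw [SimpleGraph.sup_adj, SimpleGraph.edge_adj, Sym2.eq_iff]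
    constructor
    · rintro (h | ⟨h, -⟩)
      · exact Or.inl h
      · exact Or.inr h
    · rintro (h | h)
      · exact Or.inl h
      · refine Or.inr ⟨h, ?_⟩
        rintro rfl
        rcases h with ⟨h1, h2⟩ | ⟨h1, h2⟩
        · exact c.ne₁ (h1.symm.trans h2)
        · exact c.ne₁ (h2.symm.trans h1)
  refine ⟨_, h, ?_, fun u v => by rw [c.adj, h, or_assoc]⟩
  rw [h]
  exact not_or.2 ⟨c.nadj₂, c.ne⟩

lemma lev_eq_zero_iff {x y w : V} :
    lev T x y w = 0 ↔ T.dist y w = T.dist x w + T.dist x y := by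
  rw [lev, div_eq_zero_iff, or_iff_left (by norm_num)]
  constructor
  · intro h
    have : (T.dist y w : ℝ) = T.dist x w + T.dist x y := by linarith
    exact_mod_cast this
  · intro h
    rw [h]; push_cast; ring

variable [Fintype V]

lemma Config.lap_eq (c : Config G T x₁ y₁ x₂ y₂) (g : V → ℝ) (u : V) :
    lap G g u = lap T g u + (g x₁ - g y₁) * (dl x₁ u - dl y₁ u) +
      (g x₂ - g y₂) * (dl x₂ u - dl y₂ u) := by
  obtain ⟨H, h1, h2, h3⟩ := c.exists_mid
  rw [lap_add_edge c.ne₂ h2 h3, lap_add_edge c.ne₁ c.nadj₁ h1]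

lemma Config.vdeg_eq (c : Config G T x₁ y₁ x₂ y₂) (u : V) :
    (vdeg G u : ℝ) = vdeg T u + (dl x₁ u + dl y₁ u) + (dl x₂ u + dl y₂ u) := by
  obtain ⟨H, h1, h2, h3⟩ := c.exists_mid
  rw [vdeg_add_edge c.ne₂ h2 h3, vdeg_add_edge c.ne₁ c.nadj₁ h1]

/-- If the two cycles share no edge, each shortens the distance by the square of the difference
of the levels divided by its length. -/
lemma Config.eRes_eq (c : Config G T x₁ y₁ x₂ y₂)
    (hd : T.dist x₁ x₂ + T.dist y₁ y₂ = T.dist x₁ y₂ + T.dist y₁ x₂) (a b : V) :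
    eRes G a b = T.dist a b - (lev T x₁ y₁ a - lev T x₁ y₁ b) ^ 2 / (T.dist x₁ y₁ + 1) -
      (lev T x₂ y₂ a - lev T x₂ y₂ b) ^ 2 / (T.dist x₂ y₂ + 1) := by
  by_cases hab : a = b
  · simp [hab, eRes_self]
  have hT := c.tree
  have hd' : (T.dist x₁ x₂ : ℝ) + T.dist y₁ y₂ = T.dist x₁ y₂ + T.dist y₁ x₂ := by
    exact_mod_cast hd
  set p : ℝ := T.dist x₁ y₁ + 1 with hp
  set q : ℝ := T.dist x₂ y₂ + 1 with hq
  have hp0 : p ≠ 0 := by positivity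
  have hq0 : q ≠ 0 := by positivity
  set α : ℝ := (lev T x₁ y₁ b - lev T x₁ y₁ a) / p with hα
  set β : ℝ := (lev T x₂ y₂ b - lev T x₂ y₂ a) / q with hβ
  have hα' : α * p = lev T x₁ y₁ b - lev T x₁ y₁ a := div_mul_cancel₀ _ hp0
  have hβ' : β * q = lev T x₂ y₂ b - lev T x₂ y₂ a := div_mul_cancel₀ _ hq0
  -- the potential: the tree potential corrected by a circulation along each cycle
  set φ : V → ℝ := fun v => 1 * lev T b a v +
    1 * (α * lev T x₁ y₁ v + β * lev T x₂ y₂ v) with hφ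
  have hφv : ∀ v, φ v = lev T b a v + α * lev T x₁ y₁ v + β * lev T x₂ y₂ v := fun v => by
    simp only [hφ]; ring
  have c1 := fun u v : V => congrArg (Nat.cast : ℕ → ℝ) (T.dist_comm (u := u) (v := v))
  have h1 : φ x₁ - φ y₁ = α := by
    rw [hφv, hφv]
    simp only [lev, SimpleGraph.dist_self, Nat.cast_zero] at hα' ⊢
    rw [c1 y₁ x₁, c1 x₂ x₁, c1 x₂ y₁, c1 y₂ x₁, c1 y₂ y₁, c1 b x₁, c1 b y₁, c1 a x₁, c1 a y₁]
    rw [hp] at hα'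
    linear_combination -hα' + β / 2 * hd'
  have h2 : φ x₂ - φ y₂ = β := by
    rw [hφv, hφv]
    simp only [lev, SimpleGraph.dist_self, Nat.cast_zero] at hβ' ⊢
    rw [c1 y₂ x₂, c1 b x₂, c1 b y₂, c1 a x₂, c1 a y₂]
    rw [hq] at hβ'
    linear_combination -hβ' + α / 2 * hd'
  rw [P33Proof.eRes_eq hab φ]
  · rw [hφv, hφv]
    have e1 : (lev T x₁ y₁ a - lev T x₁ y₁ b) ^ 2 / p =
        -α * (lev T x₁ y₁ a - lev T x₁ y₁ b) := by rw [hα]; ring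
    have e2 : (lev T x₂ y₂ a - lev T x₂ y₂ b) ^ 2 / q =
        -β * (lev T x₂ y₂ a - lev T x₂ y₂ b) := by rw [hβ]; ring
    have e3 : lev T b a a - lev T b a b = T.dist a b := by
      simp only [lev, SimpleGraph.dist_self, Nat.cast_zero]
      rw [c1 b a]; ring
    rw [e1, e2, ← e3]; ring
  · intro u
    rw [c.lap_eq, h1, h2, hφ, lap_comb, lap_comb, lap_lev hT, lap_lev hT, lap_lev hT]
    ring

lemma Config.sum_vdeg_mul (c : Config G T x₁ y₁ x₂ y₂) (g : V → ℝ) :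
    ∑ u, (vdeg G u : ℝ) * g u =
      ∑ u, (vdeg T u : ℝ) * g u + (g x₁ + g y₁) + (g x₂ + g y₂) := by
  rw [sum_congr rfl fun u _ => by
    rw [c.vdeg_eq, show ((vdeg T u : ℝ) + (dl x₁ u + dl y₁ u) + (dl x₂ u + dl y₂ u)) * g u =
      vdeg T u * g u + dl x₁ u * g u + dl y₁ u * g u + dl x₂ u * g u + dl y₂ u * g u by ring]]
  simp only [sum_add_distrib, sum_dl_mul]
  ring

/-- The energy of the levels along one cycle, weighted by the degrees. -/
lemma Config.sum_sum_lev (c : Config G T x₁ y₁ x₂ y₂) (h1 : lev T x₁ y₁ x₂ = 0)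
    (h2 : lev T x₁ y₁ y₂ = 0) :
    ∑ v, ∑ u, (vdeg G u : ℝ) * (lev T x₁ y₁ u - lev T x₁ y₁ v) ^ 2 =
      2 * ∑ u, ∑ v, (lev T x₁ y₁ u - lev T x₁ y₁ v) ^ 2 + 2 * ∑ v, lev T x₁ y₁ v ^ 2 := by
  rw [sum_comm (f := fun u v => (lev T x₁ y₁ u - lev T x₁ y₁ v) ^ 2), mul_sum, mul_sum,
    ← sum_add_distrib]
  refine sum_congr rfl fun v _ => ?_
  rw [c.sum_vdeg_mul, sum_vdeg_lev c.tree x₁ y₁ (fun t => (t - lev T x₁ y₁ v) ^ 2), h1, h2]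
  ring

/-- The contribution of one cycle to the degree resistance distance. -/
noncomputable def contrib (T : SimpleGraph V) (x y : V) : ℝ :=
  (∑ v, (T.dist x v : ℝ)) + (∑ v, (T.dist y v : ℝ)) -
    (2 * ∑ u, ∑ v, (lev T x y u - lev T x y v) ^ 2 + 2 * ∑ v, lev T x y v ^ 2) /
      (T.dist x y + 1)

/-- `DR` for two cycles that are attached to each other at `x₁` and `x₂`. -/
lemma Config.DR_eq (c : Config G T x₁ y₁ x₂ y₂) (h1 : lev T x₁ y₁ x₂ = 0)
    (h2 : lev T x₁ y₁ y₂ = 0) (h3 : lev T x₂ y₂ x₁ = 0) (h4 : lev T x₂ y₂ y₁ = 0) :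
    DR G = 2 * ∑ u, ∑ v, (T.dist u v : ℝ) - Fintype.card V * (Fintype.card V - 1) +
      contrib T x₁ y₁ + contrib T x₂ y₂ := by
  have hd : T.dist x₁ x₂ + T.dist y₁ y₂ = T.dist x₁ y₂ + T.dist y₁ x₂ := by
    have : (T.dist x₁ x₂ : ℝ) + T.dist y₁ y₂ = T.dist x₁ y₂ + T.dist y₁ x₂ := by
      unfold lev at h1 h2
      linarith
    exact_mod_cast this
  have hr := c.eRes_eq hd
  have hsymm : ∀ u v, eRes G u v = eRes G v u := fun u v => by
    rw [hr, hr, T.dist_comm (u := u)]; ring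
  have hDR : DR G = ∑ v, ∑ u, (vdeg G u : ℝ) * eRes G u v := by
    have e : ∑ v, ∑ u, (vdeg G v : ℝ) * eRes G u v = ∑ v, ∑ u, (vdeg G u : ℝ) * eRes G u v := by
      rw [sum_comm]
      exact sum_congr rfl fun v _ => sum_congr rfl fun u _ => by rw [hsymm]
    rw [DR]
    simp only [add_mul, sum_add_distrib]
    rw [e]; ring
  have hdist : ∑ v, ∑ u, (vdeg G u : ℝ) * T.dist u v = 2 * ∑ u, ∑ v, (T.dist u v : ℝ)
      - Fintype.card V * (Fintype.card V - 1)
      + (∑ v, (T.dist x₁ v : ℝ) + ∑ v, (T.dist y₁ v : ℝ))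
      + (∑ v, (T.dist x₂ v : ℝ) + ∑ v, (T.dist y₂ v : ℝ)) := by
    have : ∀ v, ∑ u, (vdeg G u : ℝ) * T.dist u v = 2 * ∑ u, (T.dist v u : ℝ)
        - (Fintype.card V - 1) + (T.dist x₁ v + T.dist y₁ v) + (T.dist x₂ v + T.dist y₂ v) := by
      intro v
      rw [c.sum_vdeg_mul (fun u => (T.dist u v : ℝ)), ← sum_vdeg_dist c.tree v,
        sum_congr rfl fun u _ => by rw [T.dist_comm (u := u) (v := v)]]
    rw [sum_congr rfl fun v _ => this v]
    simp only [sum_add_distrib, sum_sub_distrib, ← mul_sum, sum_const, card_univ, nsmul_eq_mul]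
    ring
  have e1 := c.sum_sum_lev h1 h2
  have e2 := c.swap.sum_sum_lev h3 h4
  rw [hDR]
  have : ∀ v u, (vdeg G u : ℝ) * eRes G u v = vdeg G u * T.dist u v
      - vdeg G u * (lev T x₁ y₁ u - lev T x₁ y₁ v) ^ 2 / (T.dist x₁ y₁ + 1)
      - vdeg G u * (lev T x₂ y₂ u - lev T x₂ y₂ v) ^ 2 / (T.dist x₂ y₂ + 1) := by
    intro v u; rw [hr]; ring
  rw [sum_congr rfl fun v _ => sum_congr rfl fun u _ => this v u]
  simp only [sum_sub_distrib, ← sum_div]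
  rw [hdist, e1, e2, contrib, contrib]
  ring

/-- The three vertices at level `0` required by `cycle_bound` are taken from the other cycle: its
endpoints `x₂`, `y₂` and a vertex between them. -/
lemma Config.contrib_le (c : Config G T x₁ y₁ x₂ y₂) (h1 : lev T x₁ y₁ x₂ = 0)
    (h2 : lev T x₁ y₁ y₂ = 0) (h3 : lev T x₂ y₂ x₁ = 0) (h4 : lev T x₂ y₂ y₁ = 0) :
    contrib T x₁ y₁ ≤
      Fintype.card V * (Fintype.card V - 1) - (26 * Fintype.card V - 44) / 3 := by
  classical
  have hc := c.tree.connected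
  have hx₂ := lev_eq_zero_iff.1 h1
  have hy₂ := lev_eq_zero_iff.1 h2
  have hx₁ := lev_eq_zero_iff.1 h3
  have hy₁ := lev_eq_zero_iff.1 h4
  have hD := c.swap.two_le
  obtain ⟨z, hz1, hz2⟩ := exists_between hc x₂ y₂ 1 (by omega)
  have hz : T.dist y₁ z = T.dist x₁ z + T.dist x₁ y₁ := by
    have t1 : T.dist y₂ x₁ ≤ T.dist y₂ z + T.dist z x₁ := hc.dist_triangle
    have t2 : T.dist y₂ y₁ ≤ T.dist y₂ z + T.dist z y₁ := hc.dist_triangle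
    have t3 : T.dist z x₁ ≤ T.dist z x₂ + T.dist x₂ x₁ := hc.dist_triangle
    have t4 : T.dist z y₁ ≤ T.dist z x₂ + T.dist x₂ y₁ := hc.dist_triangle
    rw [T.dist_comm (u := y₂) (v := z)] at t1 t2
    rw [T.dist_comm (u := z) (v := x₂)] at t3 t4
    rw [T.dist_comm (u := y₁) (v := z), T.dist_comm (u := x₁) (v := z)]
    rw [T.dist_comm (u := y₁) (v := x₂), T.dist_comm (u := x₁) (v := x₂)] at hx₂
    omega
  refine cycle_bound c.tree c.two_le {x₂, z, y₂} ?_ ?_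
  · rw [card_eq_three]
    refine ⟨x₂, z, y₂, ?_, c.ne₂, ?_, rfl⟩
    · rintro rfl; simp at hz1
    · rintro rfl; simp at hz2; omega
  · simp [hx₂, hy₂, hz]

/-- The upper bound for two cycles that are attached to each other at `x₁` and `x₂`. -/
lemma Config.DR_le (c : Config G T x₁ y₁ x₂ y₂) (h1 : lev T x₁ y₁ x₂ = 0)
    (h2 : lev T x₁ y₁ y₂ = 0) (h3 : lev T x₂ y₂ x₁ = 0) (h4 : lev T x₂ y₂ y₁ = 0) :
    DR G ≤ 2 / 3 * (Fintype.card V : ℝ) ^ 3 + (Fintype.card V : ℝ) ^ 2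
      - 19 * Fintype.card V + 88 / 3 := by
  have e := (Nat.cast_le (α := ℝ)).2 (sum_sum_dist_le c.tree.connected)
  push_cast at e
  have e1 := c.contrib_le h1 h2 h3 h4
  have e2 := c.swap.contrib_le h3 h4 h1 h2
  rw [c.DR_eq h1 h2 h3 h4]
  linarith

end Config

/-! ### The graph `P33` -/

section Path

open SimpleGraph

lemma pathGraph_isTree {n : ℕ} (hn : 0 < n) : (pathGraph n).IsTree := by
  obtain ⟨m, rfl⟩ := Nat.exists_eq_succ_of_ne_zero hn.ne'
  refine isTree_of_minimal_connected ⟨pathGraph_connected m, fun H hH hle => ?_⟩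
  have key : ∀ u v : Fin (m + 1), u.val + 1 = v.val → H.Adj u v := by
    intro u v huv
    obtain ⟨w⟩ := hH.preconnected u v
    obtain ⟨d, -, hd1, hd2⟩ := w.exists_boundary_dart {x | x.val ≤ u.val} (le_refl u.val)
      (by simp only [Set.mem_ofPred_eq]; omega)
    have h := d.adj
    have h' := pathGraph_adj.1 (hle h)
    simp only [Set.mem_ofPred_eq] at hd1 hd2
    rwa [show d.fst = u from Fin.ext (by omega), show d.snd = v from Fin.ext (by omega)] at h
  intro u v huv
  rcases pathGraph_adj.1 huv with h | h
  · exact key u v h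
  · exact (key v u h).symm

lemma pathGraph_dist {n : ℕ} (u v : Fin n) :
    ((pathGraph n).dist u v : ℝ) = |(u.val : ℝ) - v.val| := by
  have hT := pathGraph_isTree u.pos
  have lower : ∀ (k : ℕ) (a b : Fin n), (pathGraph n).dist a b = k →
      a.val ≤ b.val + k := by
    intro k
    induction k with
    | zero =>
      intro a b h
      rw [hT.connected.dist_eq_zero_iff.1 h]; omega
    | succ k ih =>
      intro a b h
      have hba : b ≠ a := by rintro rfl; simp at h
      obtain ⟨c, hc, hd⟩ := exists_closer hT.connected hba
      have := ih a c (by omega)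
      rcases pathGraph_adj.1 hc with h | h <;> omega
  have upper : ∀ (k : ℕ) (a b : Fin n), a.val + k = b.val → (pathGraph n).dist a b ≤ k := by
    intro k
    induction k with
    | zero =>
      intro a b h
      rw [show a = b from Fin.ext (by omega)]; simp
    | succ k ih =>
      intro a b h
      have hc : a.val + k < n := by omega
      have h1 := ih a ⟨a.val + k, hc⟩ rfl
      have h2 : (pathGraph n).dist ⟨a.val + k, hc⟩ b = 1 :=
        dist_eq_one_iff_adj.2 (pathGraph_adj.2 (Or.inl (by simp only; omega)))
      have h3 : (pathGraph n).dist a b ≤ _ :=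
        hT.connected.dist_triangle (v := ⟨a.val + k, hc⟩)
      omega
  have h1 := lower _ u v rfl
  have h2 := lower _ v u rfl
  rw [(pathGraph n).dist_comm] at h2
  rcases le_total u.val v.val with h | h
  · have h3 := upper (v.val - u.val) u v (by omega)
    have h4 : u.val + (pathGraph n).dist u v = v.val := by omega
    rw [← h4]; push_cast
    rw [sub_add_cancel_left, abs_neg, abs_of_nonneg (by positivity)]
  · have h3 := upper (u.val - v.val) v u (by omega)
    rw [(pathGraph n).dist_comm] at h3
    have h4 : v.val + (pathGraph n).dist u v = u.val := by omega
    rw [← h4]; push_cast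
    rw [add_sub_cancel_left, abs_of_nonneg (by positivity)]

lemma sum_range_abs (k m : ℕ) :
    ∑ i ∈ range (k + m), |(k : ℝ) - i| = k * (k + 1) / 2 + m * (m - 1) / 2 := by
  induction m with
  | zero =>
    rw [add_zero, sum_congr rfl fun i hi => abs_of_nonneg (sub_nonneg.2
      (Nat.cast_le.2 (mem_range.1 hi).le)), sum_sub_distrib, sum_range_id_real]
    simp; ring
  | succ m ih =>
    rw [← add_assoc, sum_range_succ, ih]
    push_cast
    rw [sub_add_cancel_left, abs_neg, abs_of_nonneg (by positivity)]
    ring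

lemma sum_dist_path {n : ℕ} (u : Fin n) : ∑ v, ((pathGraph n).dist u v : ℝ) =
    u.val * (u.val + 1) / 2 + (n - u.val) * (n - u.val - 1) / 2 := by
  simp only [pathGraph_dist]
  have h := sum_range_abs u.val (n - u.val)
  rw [Nat.add_sub_cancel' u.2.le, Nat.cast_sub u.2.le] at h
  rw [← h, Fin.sum_univ_eq_sum_range (fun i => |(u.val : ℝ) - i|) n]

lemma sum_sum_dist_path (n : ℕ) : ∑ u, ∑ v, ((pathGraph n).dist u v : ℝ) =
    ((n : ℝ) ^ 3 - n) / 3 := by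
  rw [sum_congr rfl fun u _ => sum_dist_path u, Fin.sum_univ_eq_sum_range
    (fun k => (k : ℝ) * (k + 1) / 2 + (n - k) * (n - k - 1) / 2) n]
  have : ∀ k : ℕ, (k : ℝ) * (k + 1) / 2 + (n - k) * (n - k - 1) / 2 =
      (k : ℝ) ^ 2 + (1 - n) * k + (n ^ 2 - n) / 2 := fun k => by ring
  simp only [this, sum_add_distrib, ← mul_sum, sum_range_id_real, sum_range_sq_real, sum_const,
    card_range, nsmul_eq_mul]
  ring

lemma lev_path {n : ℕ} (hn : 5 ≤ n) (v : Fin n) :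
    lev (pathGraph n) ⟨2, by omega⟩ ⟨0, by omega⟩ v =
      if v.val = 0 then 2 else if v.val = 1 then 1 else 0 := by
  simp only [lev, pathGraph_dist]
  split_ifs with h0 h1
  · rw [h0]; norm_num
  · rw [h1]; norm_num
  · have : (2 : ℝ) ≤ v.val := by exact_mod_cast (by omega : 2 ≤ v.val)
    rw [abs_of_nonpos (by push_cast; linarith), abs_of_nonpos (by push_cast; linarith)]
    norm_num

lemma sum_lev_path {n : ℕ} (hn : 5 ≤ n) (g : ℝ → ℝ) (hg : g 0 = 0) :
    ∑ v, g (lev (pathGraph n) ⟨2, by omega⟩ ⟨0, by omega⟩ v) = g 2 + g 1 := by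
  simp only [lev_path hn]
  rw [Fin.sum_univ_eq_sum_range
    (fun i => g (if i = 0 then 2 else if i = 1 then 1 else 0)) n,
    ← sum_subset (range_subset_range.2 (by omega : 2 ≤ n))]
  · simp [sum_range_succ]
  · intro i _ hi
    rw [mem_range, not_lt] at hi
    rw [if_neg (by omega), if_neg (by omega), hg]

lemma contrib_path {n : ℕ} (hn : 5 ≤ n) :
    contrib (pathGraph n) ⟨2, by omega⟩ ⟨0, by omega⟩ =
      (n : ℝ) * (n - 1) - (26 * n - 44) / 3 := by
  have h1 := sum_lev_path hn (fun t => t) rfl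
  have h2 := sum_lev_path hn (fun t => t ^ 2) (by norm_num)
  rw [contrib, sum_sum_sub_sq, h1, h2, sum_dist_path, sum_dist_path, pathGraph_dist,
    Fintype.card_fin]
  push_cast
  norm_num
  ring

lemma dist_path_rev {n : ℕ} (a b : Fin n) :
    ((pathGraph n).dist a.rev b.rev : ℝ) = (pathGraph n).dist a b := by
  rw [pathGraph_dist, pathGraph_dist, Fin.val_rev, Fin.val_rev, Nat.cast_sub (by omega),
    Nat.cast_sub (by omega), abs_sub_comm]
  push_cast
  congr 1; ring

lemma lev_path_rev {n : ℕ} (x y v : Fin n) :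
    lev (pathGraph n) x.rev y.rev v.rev = lev (pathGraph n) x y v := by
  rw [lev, lev, dist_path_rev, dist_path_rev, dist_path_rev]

lemma contrib_path_rev {n : ℕ} (x y : Fin n) :
    contrib (pathGraph n) x.rev y.rev = contrib (pathGraph n) x y := by
  have hs : ∀ f : Fin n → ℝ, ∑ v, f v = ∑ v : Fin n, f v.rev := fun f =>
    (Equiv.sum_comp Fin.revPerm f).symm
  have e1 : ∀ a : Fin n, ∑ v, ((pathGraph n).dist a.rev v : ℝ) =
      ∑ v, ((pathGraph n).dist a v : ℝ) := fun a => by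
    rw [hs]; simp only [dist_path_rev]
  have e2 : ∑ v, lev (pathGraph n) x.rev y.rev v ^ 2 = ∑ v, lev (pathGraph n) x y v ^ 2 := by
    rw [hs]; simp only [lev_path_rev]
  have e3 : ∑ u, ∑ v, (lev (pathGraph n) x.rev y.rev u - lev (pathGraph n) x.rev y.rev v) ^ 2 =
      ∑ u, ∑ v, (lev (pathGraph n) x y u - lev (pathGraph n) x y v) ^ 2 := by
    rw [hs, sum_congr rfl fun u _ => hs _]; simp only [lev_path_rev]
  rw [contrib, contrib, e1, e1, e2, e3, dist_path_rev]

lemma P33_config {n : ℕ} (hn : 5 ≤ n) : Config (P33 n) (pathGraph n) ⟨2, by omega⟩ ⟨0, by omega⟩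
    (Fin.rev ⟨2, by omega⟩) (Fin.rev ⟨0, by omega⟩) := by
  refine ⟨pathGraph_isTree (by omega), ?_, ?_, ?_, ?_, ?_, ?_⟩
  · simp
  · simp
  · simp [pathGraph_adj]
  · simp [pathGraph_adj, Fin.val_rev]; omega
  · rw [Ne, Sym2.eq_iff]
    simp only [Fin.ext_iff, Fin.val_rev]
    omega
  · intro u v
    rw [P33, fromRel_adj, pathGraph_adj, Sym2.eq_iff, Sym2.eq_iff]
    simp only [Fin.ext_iff, Fin.val_rev, ne_eq]
    omega

lemma P33_DR {n : ℕ} (hn : 5 ≤ n) :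
    DR (P33 n) = (2/3)*(n : ℝ)^3 + (n : ℝ)^2 - 19*(n : ℝ) + 88/3 := by
  have far : ∀ v : Fin n, 2 ≤ v.val →
      lev (pathGraph n) ⟨2, by omega⟩ ⟨0, by omega⟩ v = 0 := fun v hv => by
    rw [lev_path hn, if_neg (by omega), if_neg (by omega)]
  have far' : ∀ v : Fin n, 2 ≤ v.val → lev (pathGraph n) (Fin.rev ⟨2, by omega⟩)
      (Fin.rev ⟨0, by omega⟩) v.rev = 0 := fun v hv => by rw [lev_path_rev, far v hv]
  rw [(P33_config hn).DR_eq (far _ ?_) (far _ ?_) ?_ ?_, contrib_path_rev, contrib_path hn,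
    sum_sum_dist_path, Fintype.card_fin]
  · ring
  · simp only [Fin.val_rev]; omega
  · simp only [Fin.val_rev]; omega
  · have := far' (Fin.rev ⟨2, by omega⟩) (by simp only [Fin.val_rev]; omega)
    rwa [Fin.rev_rev] at this
  · have := far' (Fin.rev ⟨0, by omega⟩) (by simp only [Fin.val_rev]; omega)
    rwa [Fin.rev_rev] at this

end Path

/-! ### Cycles in graphs with two independent cycles -/

section Cycles

open SimpleGraph

variable {V : Type*} {G T : SimpleGraph V} {x₁ y₁ x₂ y₂ : V}

lemma Config.le (c : Config G T x₁ y₁ x₂ y₂) : T ≤ G := fun u v h => (c.adj u v).2 (Or.inl h)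

lemma Config.adj₁ (c : Config G T x₁ y₁ x₂ y₂) : G.Adj x₁ y₁ :=
  (c.adj _ _).2 (Or.inr (Or.inl rfl))

lemma Config.adj₂ (c : Config G T x₁ y₁ x₂ y₂) : G.Adj x₂ y₂ :=
  (c.adj _ _).2 (Or.inr (Or.inr rfl))

/-- The set of vertices between `a` and `b`. -/
def btw (T : SimpleGraph V) (a b : V) : Set V := {z | T.dist a z + T.dist z b = T.dist a b}

lemma mem_btw {a b z : V} : z ∈ btw T a b ↔ T.dist a z + T.dist z b = T.dist a b := Iff.rfl

lemma btw_comm (a b : V) : btw T a b = btw T b a := by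
  ext z
  rw [mem_btw, mem_btw, T.dist_comm (u := a) (v := z), T.dist_comm (u := z) (v := b),
    T.dist_comm (u := a) (v := b), add_comm]

lemma left_mem_btw (a b : V) : a ∈ btw T a b := by simp [mem_btw]

lemma right_mem_btw (a b : V) : b ∈ btw T a b := by simp [mem_btw]

/-- Distances along a geodesic. -/
lemma between_dist (hT : T.IsTree) {a b u v : V} (hu : u ∈ btw T a b) (hv : v ∈ btw T a b)
    (h : T.dist a u ≤ T.dist a v) : T.dist a u + T.dist u v = T.dist a v := by
  obtain ⟨z, hz1, hz2⟩ := exists_between hT.connected a v _ h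
  have h1 : T.dist z b ≤ T.dist z v + T.dist v b := hT.connected.dist_triangle
  have h2 : T.dist a b ≤ T.dist a z + T.dist z b := hT.connected.dist_triangle
  rw [mem_btw] at hu hv
  have := between_unique hT z u (by omega) hu hz1
  rwa [this] at hz2

lemma Config.btw_ne_third (c : Config G T x₁ y₁ x₂ y₂)
    (h : T.dist x₁ x₂ + T.dist y₁ y₂ < T.dist x₁ y₂ + T.dist y₁ x₂) :
    btw T x₁ y₁ ≠ btw T x₁ x₂ ∪ btw T y₂ y₁ := by
  intro he
  have hx : x₂ ∈ btw T x₁ y₁ := he ▸ Or.inl (right_mem_btw _ _)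
  have hy : y₂ ∈ btw T x₁ y₁ := he ▸ Or.inr (left_mem_btw _ _)
  have hx' := mem_btw.1 hx
  have hy' := mem_btw.1 hy
  rw [T.dist_comm (u := x₂) (v := y₁)] at hx'
  rw [T.dist_comm (u := y₂) (v := y₁)] at hy'
  have h1 := between_dist c.tree hx hy (by omega)
  have h2 : T.dist x₂ y₂ ≠ 1 := fun h => c.nadj₂ (dist_eq_one_iff_adj.1 h)
  -- the vertex following `x₂` on the path from `x₁` to `y₁` lies strictly before `y₂`
  obtain ⟨z, hz1, hz2⟩ := exists_between c.tree.connected x₁ y₁ (T.dist x₁ x₂ + 1) (by omega)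
  have hz : z ∈ btw T x₁ y₁ := mem_btw.2 (by omega)
  rw [he] at hz
  rcases hz with hz | hz
  · rw [mem_btw] at hz; omega
  · rw [mem_btw, T.dist_comm (u := y₂) (v := y₁)] at hz; omega

lemma Config.btw_ne_btw (c : Config G T x₁ y₁ x₂ y₂)
    (h : T.dist x₁ x₂ + T.dist y₁ y₂ < T.dist x₁ y₂ + T.dist y₁ x₂) :
    btw T x₁ y₁ ≠ btw T x₂ y₂ := by
  intro he
  have hx : x₂ ∈ btw T x₁ y₁ := he ▸ left_mem_btw _ _
  have hy : y₂ ∈ btw T x₁ y₁ := he ▸ right_mem_btw _ _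
  have hx₁ : x₁ ∈ btw T x₂ y₂ := he ▸ left_mem_btw _ _
  have hy₁ : y₁ ∈ btw T x₂ y₂ := he ▸ right_mem_btw _ _
  have hx' := mem_btw.1 hx
  have hy' := mem_btw.1 hy
  rw [mem_btw] at hx₁ hy₁
  rw [T.dist_comm (u := x₂) (v := y₁)] at hx' hy₁
  rw [T.dist_comm (u := y₂) (v := y₁)] at hy'
  rw [T.dist_comm (u := x₂) (v := x₁)] at hx₁
  have h1 := between_dist c.tree hx hy (by omega)
  have e1 := c.tree.connected.dist_eq_zero_iff.1 (by omega : T.dist x₁ x₂ = 0)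
  have e2 := c.tree.connected.dist_eq_zero_iff.1 (by omega : T.dist y₁ y₂ = 0)
  exact c.ne (by rw [e1, e2])

variable [DecidableEq V]

lemma isCycleSet_of_path {u v : V} (h : G.Adj v u) (p : G.Walk u v) (hp : p.IsPath)
    (he : s(v, u) ∉ p.edges) : IsCycleSet G {z | z ∈ p.support} := by
  refine ⟨v, Walk.cons h p, (Walk.cons_isCycle_iff p h).2 ⟨hp, he⟩, ?_⟩
  ext z
  simp only [Walk.support_cons, List.toFinset_cons, coe_insert, List.coe_toFinset]
  exact ⟨by rintro (rfl | h); exacts [p.end_mem_support, h], Or.inr⟩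

lemma Config.isCycleSet_btw (c : Config G T x₁ y₁ x₂ y₂) : IsCycleSet G (btw T x₁ y₁) := by
  obtain ⟨p, hp, hps⟩ := exists_path_support c.tree x₁ y₁
  have := isCycleSet_of_path c.adj₁.symm (p.mapLe c.le) ((Walk.isPath_mapLe _).2 hp) (by
    rw [Walk.edges_mapLe_eq_edges]
    exact fun h => c.nadj₁ (p.adj_of_mem_edges h).symm)
  simp only [Walk.support_mapLe_eq_support, hps] at this
  exact this

/-- If the paths in `T` from `x₁` to `y₁` and from `x₂` to `y₂` traverse a common edge in the same
direction, there is a third cycle, which passes through both further edges. -/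
lemma Config.isCycleSet_third (c : Config G T x₁ y₁ x₂ y₂)
    (h : T.dist x₁ x₂ + T.dist y₁ y₂ < T.dist x₁ y₂ + T.dist y₁ x₂) :
    IsCycleSet G (btw T x₁ x₂ ∪ btw T y₂ y₁) := by
  have hc := c.tree.connected
  obtain ⟨p, hp, hps⟩ := exists_path_support c.tree x₁ x₂
  obtain ⟨q, hq, hqs⟩ := exists_path_support c.tree y₂ y₁
  have := isCycleSet_of_path c.adj₁.symm
    ((p.mapLe c.le).append (Walk.cons c.adj₂ (q.mapLe c.le))) (by
      rw [Walk.isPath_def, Walk.support_append, Walk.support_cons, List.tail_cons,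
        Walk.support_mapLe_eq_support, Walk.support_mapLe_eq_support, List.nodup_append']
      refine ⟨hp.support_nodup, hq.support_nodup, fun z hz hz' => ?_⟩
      rw [hps] at hz
      rw [hqs] at hz'
      have h1 : T.dist x₁ y₂ ≤ T.dist x₁ z + T.dist z y₂ := hc.dist_triangle
      have h2 : T.dist y₁ x₂ ≤ T.dist y₁ z + T.dist z x₂ := hc.dist_triangle
      rw [T.dist_comm (u := y₂) (v := z), T.dist_comm (u := z) (v := y₁),
        T.dist_comm (u := y₂) (v := y₁)] at hz'
      omega) (by
      rw [Walk.edges_append, Walk.edges_cons, Walk.edges_mapLe_eq_edges,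
        Walk.edges_mapLe_eq_edges, List.mem_append, List.mem_cons]
      rintro (h | h | h)
      · exact c.nadj₁ (p.adj_of_mem_edges h).symm
      · exact c.ne (by rw [← h, Sym2.eq_swap])
      · exact c.nadj₁ (q.adj_of_mem_edges h).symm)
  convert this using 1
  ext z
  simp only [Set.mem_union, Set.mem_ofPred_eq, Walk.support_append, Walk.support_cons,
    List.tail_cons, Walk.support_mapLe_eq_support, List.mem_append, hps, hqs, mem_btw]

/-- If `G` has only two cycles, the two tree paths have no common edge. -/
lemma Config.edge_disjoint [Finite V] (c : Config G T x₁ y₁ x₂ y₂)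
    (hG : {s : Set V | IsCycleSet G s}.ncard = 2) :
    T.dist x₁ x₂ + T.dist y₁ y₂ = T.dist x₁ y₂ + T.dist y₁ x₂ := by
  have key : ∀ {x₁ y₁ x₂ y₂ : V}, Config G T x₁ y₁ x₂ y₂ →
      ¬ T.dist x₁ x₂ + T.dist y₁ y₂ < T.dist x₁ y₂ + T.dist y₁ x₂ := by
    intro x₁ y₁ x₂ y₂ c h
    have h3 := c.swap.btw_ne_third (by
      rw [T.dist_comm (u := x₂) (v := x₁), T.dist_comm (u := y₂) (v := y₁),
        T.dist_comm (u := x₂) (v := y₁), T.dist_comm (u := y₂) (v := x₁)]; omega)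
    rw [btw_comm x₂ x₁, btw_comm y₁ y₂] at h3
    have := (Set.two_lt_ncard_iff (Set.toFinite {s : Set V | IsCycleSet G s})).2
      ⟨_, _, _, c.isCycleSet_btw, c.swap.isCycleSet_btw, c.isCycleSet_third h, c.btw_ne_btw h,
        c.btw_ne_third h, h3⟩
    omega
  have h1 := key c
  have h2 := key c.rev₂
  omega

end Cycles

/-! ### The choice of the spanning tree -/

section Exchange

open SimpleGraph

variable {V : Type*} {G T : SimpleGraph V} {x₁ y₁ x₂ y₂ : V}

lemma exists_config [Finite V] (hG : G.Connected) (hcard : Nat.card G.edgeSet = Nat.card V + 1) :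
    ∃ T x₁ y₁ x₂ y₂, Config G T x₁ y₁ x₂ y₂ := by
  obtain ⟨T, hle, hT⟩ := hG.exists_isTree_le
  have h1 := (isTree_iff_connected_and_card.1 hT).2
  rw [Nat.card_coe_set_eq] at h1 hcard
  have h2 := Set.ncard_sdiff_add_ncard_of_subset (edgeSet_mono hle)
  obtain ⟨e, f, hef, hs⟩ := Set.ncard_eq_two.1 (by omega : (G.edgeSet \ T.edgeSet).ncard = 2)
  have he : e ∈ G.edgeSet \ T.edgeSet := by rw [hs]; simp
  have hf : f ∈ G.edgeSet \ T.edgeSet := by rw [hs]; simp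
  induction e with | _ x₁ y₁ =>
  induction f with | _ x₂ y₂ =>
  refine ⟨T, x₁, y₁, x₂, y₂, hT, he.1.ne, hf.1.ne, he.2, hf.2, hef.symm, fun u v => ?_⟩
  have h3 : s(u, v) ∈ G.edgeSet \ T.edgeSet ↔
      s(u, v) ∈ ({s(x₁, y₁), s(x₂, y₂)} : Set (Sym2 V)) := by rw [hs]
  simp only [Set.mem_sdiff, mem_edgeSet, Set.mem_insert_iff, Set.mem_singleton_iff] at h3
  have h4 := @hle u v
  tauto

/-- A tree stays a tree when the first edge of the path from `x` to `y` is replaced by `xy`;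
paths that did not use the removed edge survive. -/
lemma exists_exchange [Finite V] (hT : T.IsTree) {x y b : V} (hxy : x ≠ y) (hn : ¬ T.Adj x y)
    (hb : T.Adj x b) (hby : T.dist y x = T.dist y b + 1) :
    ∃ T' : SimpleGraph V, T'.IsTree ∧
      (∀ u v, T'.Adj u v ↔ (T.Adj u v ∧ s(u, v) ≠ s(x, b)) ∨ s(u, v) = s(x, y)) ∧
      ∀ t, T.dist t x = T.dist t b + 1 → T'.dist b t ≤ T.dist t b := by
  obtain ⟨T', hadj⟩ : ∃ T' : SimpleGraph V,
      ∀ u v, T'.Adj u v ↔ (T.Adj u v ∧ s(u, v) ≠ s(x, b)) ∨ s(u, v) = s(x, y) := by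
    refine ⟨⟨fun u v => (T.Adj u v ∧ s(u, v) ≠ s(x, b)) ∨ s(u, v) = s(x, y), ⟨?_⟩, ⟨?_⟩⟩,
      fun u v => Iff.rfl⟩
    · intro u v h
      rwa [T.adj_comm, Sym2.eq_swap]
    · rintro u (h | h)
      · exact h.1.ne rfl
      · rw [Sym2.eq_iff] at h
        rcases h with ⟨h1, h2⟩ | ⟨h1, h2⟩
        · exact hxy (h1.symm.trans h2)
        · exact hxy (h2.symm.trans h1)
  -- geodesics on the side of `b` avoid the removed edge
  have hwalk : ∀ t, T.dist t x = T.dist t b + 1 → ∀ k u, T.dist t u = k → k ≤ T.dist t b →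
      ∃ w : T'.Walk u t, w.length = k := by
    intro t ht k
    induction k with
    | zero =>
      intro u hu _
      rw [hT.connected.dist_eq_zero_iff] at hu
      subst hu
      exact ⟨Walk.nil, rfl⟩
    | succ k ih =>
      intro u hu hk
      have hut : u ≠ t := by rintro rfl; simp at hu
      obtain ⟨v, hv, hvd⟩ := exists_closer hT.connected hut
      obtain ⟨w, hw⟩ := ih v (by omega) (by omega)
      refine ⟨Walk.cons ((hadj u v).2 (Or.inl ⟨hv, ?_⟩)) w, by simp [hw]⟩
      rw [Ne, Sym2.eq_iff]
      rintro (⟨rfl, -⟩ | ⟨-, rfl⟩) <;> omega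
  have hconn : T'.Connected := by
    have hxb : T'.Reachable x b := by
      obtain ⟨w, -⟩ := hwalk y hby _ b rfl le_rfl
      exact ((hadj x y).2 (Or.inr rfl)).reachable.trans w.reachable.symm
    have hstep : ∀ u v, T.Adj u v → T'.Reachable u v := by
      intro u v huv
      by_cases h : s(u, v) = s(x, b)
      · rw [Sym2.eq_iff] at h
        rcases h with ⟨rfl, rfl⟩ | ⟨rfl, rfl⟩
        exacts [hxb, hxb.symm]
      · exact ((hadj u v).2 (Or.inl ⟨huv, h⟩)).reachable
    have hall : ∀ {u v} (w : T.Walk u v), T'.Reachable u v := by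
      intro u v w
      induction w with
      | nil => exact Reachable.refl _
      | cons h _ ih => exact (hstep _ _ h).trans ih
    have := hT.connected.nonempty
    exact ⟨fun u v => (hT.connected.preconnected u v).elim fun w => hall w⟩
  have hcard : T'.edgeSet = insert s(x, y) (T.edgeSet \ {s(x, b)}) := by
    ext e
    induction e with | _ u v =>
    rw [mem_edgeSet, hadj, or_comm]
    simp
  refine ⟨T', isTree_iff_connected_and_card.2 ⟨hconn, ?_⟩, hadj, fun t ht => ?_⟩
  · rw [Nat.card_coe_set_eq, hcard, Set.ncard_exchange (by exact hn) (by exact hb),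
      ← Nat.card_coe_set_eq]
    exact (isTree_iff_connected_and_card.1 hT).2
  · obtain ⟨w, hw⟩ := hwalk t ht _ b rfl le_rfl
    rw [← hw]
    exact T'.dist_le w

/-- When the tree and the two further edges are chosen so that `dist x₁ x₂` is as small as
possible, the branch containing `x₂` is attached at `x₁`. -/
lemma Config.gate [Finite V] (c : Config G T x₁ y₁ x₂ y₂)
    (hmin : ∀ T' a b a' b', Config G T' a b a' b' → T.dist x₁ x₂ ≤ T'.dist a a') :
    T.dist y₁ x₂ = T.dist x₁ x₂ + T.dist x₁ y₁ := by
  obtain ⟨b, hb, hbd⟩ := exists_closer c.tree.connected c.ne₁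
  rcases c.tree.dist_eq_dist_add_one_of_adj x₂ hb with h | h
  · obtain ⟨T', hT', hadj, hd⟩ := exists_exchange c.tree c.ne₁ c.nadj₁ hb hbd
    have hby : b ≠ y₁ := by rintro rfl; exact c.nadj₁ hb
    have c' : Config G T' b x₁ x₂ y₂ := by
      refine ⟨hT', hb.ne.symm, c.ne₂, ?_, ?_, ?_, ?_⟩
      · rw [hadj, Sym2.eq_swap]
        rintro (⟨-, h⟩ | h)
        · exact h rfl
        · exact hby (Sym2.congr_right.1 h)
      · rw [hadj]
        rintro (⟨h, -⟩ | h)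
        · exact c.nadj₂ h
        · exact c.ne h
      · intro h
        rw [Sym2.eq_iff] at h
        rcases h with ⟨rfl, rfl⟩ | ⟨rfl, rfl⟩
        exacts [c.nadj₂ hb.symm, c.nadj₂ hb]
      · intro u v
        rw [c.adj, hadj, Sym2.eq_swap (a := b)]
        have : s(u, v) = s(x₁, b) → T.Adj u v := by
          intro h
          rw [← mem_edgeSet, h]
          exact hb
        tauto
    have h1 := hmin _ _ _ _ _ c'
    have h2 := hd x₂ h
    rw [T.dist_comm (u := x₁)] at h1
    omega
  · rw [between_of_step c.tree x₁ b hb h hbd, T.dist_comm (u := y₁)]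
    omega

end Exchange

/-- The upper bound for graphs with two cycles. -/
lemma DR_le {V : Type*} [Fintype V] [DecidableEq V] {G : SimpleGraph V} (hG : G.Connected)
    (hcard : Nat.card G.edgeSet = Nat.card V + 1)
    (hcyc : {s : Set V | IsCycleSet G s}.ncard = 2) :
    DR G ≤ 2 / 3 * (Fintype.card V : ℝ) ^ 3 + (Fintype.card V : ℝ) ^ 2
      - 19 * Fintype.card V + 88 / 3 := by
  classical
  obtain ⟨T₀, a, b, a', b', c₀⟩ := exists_config hG hcard
  have hex : ∃ k, ∃ T x₁ y₁ x₂ y₂, Config G T x₁ y₁ x₂ y₂ ∧ T.dist x₁ x₂ = k :=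
    ⟨_, T₀, a, b, a', b', c₀, rfl⟩
  obtain ⟨T, x₁, y₁, x₂, y₂, c, hk⟩ := Nat.find_spec hex
  have hmin : ∀ T' a b a' b', Config G T' a b a' b' → T.dist x₁ x₂ ≤ T'.dist a a' :=
    fun T' a b a' b' h => hk ▸ Nat.find_min' hex ⟨T', a, b, a', b', h, rfl⟩
  have h0 := c.edge_disjoint hcyc
  have h1 := c.gate hmin
  have h2 := c.swap.gate (fun T' a b a' b' h => T.dist_comm (u := x₂) ▸ hmin T' a b a' b' h)
  have e1 := T.dist_comm (u := y₂) (v := x₁)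
  have e2 := T.dist_comm (u := x₂) (v := x₁)
  have e3 := T.dist_comm (u := y₂) (v := y₁)
  have e4 := T.dist_comm (u := x₂) (v := y₁)
  exact c.DR_le (lev_eq_zero_iff.2 h1) (lev_eq_zero_iff.2 (by omega)) (lev_eq_zero_iff.2 h2)
    (lev_eq_zero_iff.2 (by omega))

end P33Proof

/-- Among all `n`-vertex bicyclic graphs with exactly two cycles (`n ≥ 5`),
`P_n^{3,3}` attains the maximum degree resistance distance, and
`D_R(P_n^{3,3}) = (2/3)n³ + n² - 19n + 88/3`. -/
theorem P33_maximal (n : ℕ) (hn : 5 ≤ n) :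
    DR (P33 n) = (2/3)*(n : ℝ)^3 + (n : ℝ)^2 - 19*(n : ℝ) + 88/3 ∧
    ∀ G : SimpleGraph (Fin n), G.Connected → Nat.card G.edgeSet = n + 1 →
      {s : Set (Fin n) | IsCycleSet G s}.ncard = 2 →
      DR G ≤ DR (P33 n) := by
  refine ⟨P33Proof.P33_DR hn, fun G hG hcard hcyc => ?_⟩
  have := P33Proof.DR_le hG (by rwa [Nat.card_fin]) hcyc
  rw [Fintype.card_fin] at this
  rwa [P33Proof.P33_DR hn]
end
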